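/- arXiv:1004.1953 — 3 statements merged into one kernel-verified Lean document; each statement's English description precedes it below -/
import Mathlib

section
/- The function f(u) = (3/(2π)) · e^{5u/2}/(1 + e^{3u}) is a probability density on ℝ (i.e., ∫_{−∞}^∞ f(u) du = 1), its mean is ∫_{−∞}^∞ u f(u) du = π/√3, and its second moment ∫_{−∞}^∞ u² f(u) du is finite. -/
open MeasureTheory ProbabilityTheory Filter Real Topology

noncomputable section

/-!
The substitution `x = 1 / (1 + e⁻ᵛ)` turns Euler's beta integral `B(a, 1 - a) = π / sin (π a)` into
`∫ eᵃᵛ / (1 + eᵛ) dv`. After rescaling, this says that the measure with density `1 / (1 + e^{cu})`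
has moment generating function `s ↦ (π / c) / sin (π s / c)` on `(0, c)`. A moment generating
function may be differentiated under the integral sign in the interior of its domain, so polynomial
factors stay integrable there and the mean is read off from the derivative. The step density is the
case `c = 3`, `s = 5 / 2`, where the angle `π s / c` is `π - π / 6`.
-/

open Set

theorem setIntegral_Ioo_rpow_mul_one_sub_rpow {a b : ℝ} (ha : 0 < a) (hb : 0 < b) :
    ∫ x in Ioo (0 : ℝ) 1, x ^ (a - 1) * (1 - x) ^ (b - 1) = beta a b := by
  have hcomplex : Complex.betaIntegral a b =
      ((∫ x in Ioo (0 : ℝ) 1, x ^ (a - 1) * (1 - x) ^ (b - 1) : ℝ) : ℂ) := by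
    rw [Complex.betaIntegral, intervalIntegral.integral_of_le zero_le_one,
      integral_Ioc_eq_integral_Ioo, ← integral_complex_ofReal]
    refine setIntegral_congr_fun measurableSet_Ioo fun x hx => ?_
    push_cast [Complex.ofReal_cpow hx.1.le, Complex.ofReal_cpow (sub_nonneg.2 hx.2.le)]
    rfl
  rw [beta_eq_betaIntegralReal a b ha hb, hcomplex, Complex.ofReal_re]

theorem beta_one_sub (a : ℝ) : beta a (1 - a) = π / sin (π * a) := by
  rw [beta, add_sub_cancel, Real.Gamma_one, div_one, Real.Gamma_mul_Gamma_one_sub]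

theorem hasDerivAt_div_sin_mul {k t : ℝ} (h : sin (k * t) ≠ 0) :
    HasDerivAt (fun x => k / sin (k * x)) (-(k ^ 2 * cos (k * t)) / sin (k * t) ^ 2) t := by
  refine ((hasDerivAt_const t k).div (hasDerivAt_const_mul k).sin h).congr_deriv ?_
  ring

section Sigmoid

theorem setIntegral_Ioo_eq_integral_comp_sigmoid {E : Type*} [NormedAddCommGroup E]
    [NormedSpace ℝ E] (g : ℝ → E) :
    ∫ x in Ioo (0 : ℝ) 1, g x = ∫ v, (sigmoid v * (1 - sigmoid v)) • g (sigmoid v) := by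
  rw [← range_sigmoid, ← image_univ,
    integral_image_eq_integral_abs_deriv_smul MeasurableSet.univ
      (fun v _ => (hasDerivAt_sigmoid v).hasDerivWithinAt) sigmoid_injective.injOn,
    setIntegral_univ]
  congr with v
  rw [abs_of_pos (mul_pos (sigmoid_pos v) (sub_pos.2 (sigmoid_lt_one v)))]

theorem integral_sigmoid_rpow_mul_sigmoid_neg_rpow {a b : ℝ} (ha : 0 < a) (hb : 0 < b) :
    ∫ v, sigmoid v ^ a * sigmoid (-v) ^ b = beta a b := by
  rw [← setIntegral_Ioo_rpow_mul_one_sub_rpow ha hb, setIntegral_Ioo_eq_integral_comp_sigmoid]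
  congr with v
  have hpos := sigmoid_pos v
  have hneg := sigmoid_pos (-v)
  rw [← sigmoid_neg, rpow_sub_one hpos.ne', rpow_sub_one hneg.ne', smul_eq_mul]
  field_simp

theorem sigmoid_rpow_mul_sigmoid_neg_rpow (a b v : ℝ) :
    sigmoid v ^ a * sigmoid (-v) ^ b = exp (a * v) / (1 + exp v) ^ (a + b) := by
  have hneg : sigmoid (-v) = (1 + exp v)⁻¹ := by rw [sigmoid_def, neg_neg]
  have hpos : sigmoid v = exp v * (1 + exp v)⁻¹ := by
    rw [← hneg, ← sigmoid_mul_rexp_neg, mul_left_comm, ← exp_add, add_neg_cancel, exp_zero, mul_one]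
  have hden : 0 < 1 + exp v := by positivity
  rw [hpos, hneg, mul_rpow (exp_pos v).le (inv_nonneg.2 hden.le), ← exp_mul, mul_comm v, mul_assoc,
    ← rpow_add (inv_pos.2 hden), inv_rpow hden.le, div_eq_mul_inv]

end Sigmoid

theorem integral_exp_mul_div_one_add_exp_rpow {a b : ℝ} (ha : 0 < a) (hb : 0 < b) :
    ∫ v, exp (a * v) / (1 + exp v) ^ (a + b) = beta a b := by
  simp_rw [← sigmoid_rpow_mul_sigmoid_neg_rpow,
    integral_sigmoid_rpow_mul_sigmoid_neg_rpow ha hb]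

section FermiDirac

variable {c s : ℝ}

theorem integral_exp_mul_div_one_add_exp_mul (hs : s ∈ Ioo 0 c) :
    ∫ u, exp (s * u) / (1 + exp (c * u)) = π / c / sin (π / c * s) := by
  have hc : 0 < c := hs.1.trans hs.2
  have hunscaled : ∫ v, exp (s / c * v) / (1 + exp v) = π / sin (π * (s / c)) := by
    simpa [beta_one_sub] using integral_exp_mul_div_one_add_exp_rpow (div_pos hs.1 hc)
      (sub_pos.2 ((div_lt_one hc).2 hs.2))
  calc ∫ u, exp (s * u) / (1 + exp (c * u))
      = ∫ u, exp (s / c * (c * u)) / (1 + exp (c * u)) := by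
        simp_rw [← mul_assoc, div_mul_cancel₀ s hc.ne']
    _ = c⁻¹ * (π / sin (π * (s / c))) := by
        rw [Measure.integral_comp_mul_left (fun v => exp (s / c * v) / (1 + exp v)), hunscaled,
          abs_of_pos (inv_pos.2 hc), smul_eq_mul]
    _ = π / c / sin (π / c * s) := by
        ring_nf

theorem sin_pi_div_mul_pos (hs : s ∈ Ioo 0 c) : 0 < sin (π / c * s) := by
  have hc : 0 < c := hs.1.trans hs.2
  refine sin_pos_of_pos_of_lt_pi (mul_pos (div_pos pi_pos hc) hs.1) ?_
  rw [div_mul_eq_mul_div, div_lt_iff₀ hc]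
  exact mul_lt_mul_of_pos_left hs.2 pi_pos

/-- The measure on `ℝ` whose density is the Fermi–Dirac function `u ↦ 1 / (1 + e^{cu})`. The
integral of `e^{su} / (1 + e^{cu})`, as a function of `s`, is the moment generating function of the
identity under this measure. The measure is infinite; for `c > 0` it is the exponential tilts with
`0 < s < c` that are finite. -/
def fermiDiracMeasure (c : ℝ) : Measure ℝ :=
  volume.withDensity fun u => ENNReal.ofReal (1 + exp (c * u))⁻¹

namespace fermiDiracMeasure

theorem integral_eq (c : ℝ) (g : ℝ → ℝ) :
    ∫ u, g u ∂fermiDiracMeasure c = ∫ u, g u / (1 + exp (c * u)) := by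
  rw [fermiDiracMeasure, integral_withDensity_eq_integral_toReal_smul (by fun_prop) (by simp)]
  congr with u
  rw [ENNReal.toReal_ofReal (by positivity), smul_eq_mul, inv_mul_eq_div]

theorem integrable_iff (c : ℝ) (g : ℝ → ℝ) :
    Integrable g (fermiDiracMeasure c) ↔ Integrable fun u => g u / (1 + exp (c * u)) := by
  rw [fermiDiracMeasure, integrable_withDensity_iff (by fun_prop) (by simp)]
  refine integrable_congr (ae_of_all _ fun u => ?_)
  dsimp only
  rw [ENNReal.toReal_ofReal (by positivity), div_eq_mul_inv]

theorem mgf_id (hs : s ∈ Ioo 0 c) :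
    mgf id (fermiDiracMeasure c) s = π / c / sin (π / c * s) := by
  rw [mgf, integral_eq]
  exact integral_exp_mul_div_one_add_exp_mul hs

theorem Ioo_subset_interior_integrableExpSet (c : ℝ) :
    Ioo 0 c ⊆ interior (integrableExpSet id (fermiDiracMeasure c)) := by
  refine interior_maximal (fun s hs => ?_) isOpen_Ioo
  have hc : 0 < c := hs.1.trans hs.2
  -- A non-integrable function has Bochner integral `0`, and this integral is positive.
  refine Integrable.of_integral_ne_zero ?_
  exact (mgf_id hs).trans_ne (div_pos (div_pos pi_pos hc) (sin_pi_div_mul_pos hs)).ne'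

end fermiDiracMeasure

theorem integrable_pow_mul_exp_mul_div_one_add_exp_mul (hs : s ∈ Ioo 0 c) (n : ℕ) :
    Integrable fun u : ℝ => u ^ n * (exp (s * u) / (1 + exp (c * u))) := by
  simpa only [id, mul_div_assoc] using (fermiDiracMeasure.integrable_iff c _).1
    (integrable_pow_mul_exp_of_mem_interior_integrableExpSet
      (fermiDiracMeasure.Ioo_subset_interior_integrableExpSet c hs) n)

theorem integral_mul_exp_mul_div_one_add_exp_mul (hs : s ∈ Ioo 0 c) :
    ∫ u, u * (exp (s * u) / (1 + exp (c * u))) =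
      -((π / c) ^ 2 * cos (π / c * s)) / sin (π / c * s) ^ 2 := by
  have hmgf := hasDerivAt_mgf (fermiDiracMeasure.Ioo_subset_interior_integrableExpSet c hs)
  have hmgf_eq : mgf id (fermiDiracMeasure c) =ᶠ[𝓝 s] fun t => π / c / sin (π / c * t) := by
    filter_upwards [isOpen_Ioo.mem_nhds hs] with t ht using fermiDiracMeasure.mgf_id ht
  have hsin := hasDerivAt_div_sin_mul (sin_pi_div_mul_pos hs).ne'
  simpa only [fermiDiracMeasure.integral_eq, id, mul_div_assoc] using
    hmgf.unique (hsin.congr_of_eventuallyEq hmgf_eq)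

end FermiDirac

/-- The function `f(u) = (3/(2π)) e^{5u/2}/(1 + e^{3u})` is a probability density on `ℝ`,
with mean `π/√3` and finite second moment. -/
theorem step_density_moments :
    (∫ u : ℝ, (3 / (2 * Real.pi)) * Real.exp (5 * u / 2) / (1 + Real.exp (3 * u))) = 1 ∧
    (∫ u : ℝ, u * ((3 / (2 * Real.pi)) * Real.exp (5 * u / 2) / (1 + Real.exp (3 * u))))
      = Real.pi / Real.sqrt 3 ∧
    Integrable (fun u : ℝ =>
      u ^ 2 * ((3 / (2 * Real.pi)) * Real.exp (5 * u / 2) / (1 + Real.exp (3 * u)))) := by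
  have hs : (5 / 2 : ℝ) ∈ Ioo 0 3 := by norm_num
  have hangle : π / 3 * (5 / 2) = π - π / 6 := by ring
  have hsin : sin (π / 3 * (5 / 2)) = 1 / 2 := by rw [hangle, sin_pi_sub, sin_pi_div_six]
  have hcos : cos (π / 3 * (5 / 2)) = -(√3 / 2) := by rw [hangle, cos_pi_sub, cos_pi_div_six]
  simp_rw [mul_div_right_comm (5 : ℝ), mul_div_assoc (3 / (2 * π)), mul_left_comm _ (3 / (2 * π)),
    integral_const_mul]
  refine ⟨?_, ?_, (integrable_pow_mul_exp_mul_div_one_add_exp_mul hs 2).const_mul _⟩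
  · rw [integral_exp_mul_div_one_add_exp_mul hs, hsin]
    field_simp
  · rw [integral_mul_exp_mul_div_one_add_exp_mul hs, hsin, hcos]
    field_simp
    norm_num
end
end

section
/- Let E be a Polish space with a distinguished isolated point ∅, let Ω be the space of sequences ω = (ω_n¹, ω_n²)_{n∈ℤ} with values in [−∞,∞) × E, with the product topology, and let (P_v)_{v>0} be a family of Borel probability measures on Ω, each giving full mass to the set of sequences with lim_{n→−∞} ω_n¹ = −∞ and limsup_{n→+∞} ω_n¹ = +∞. Suppose there is a Borel probability law Q on Ω_+ , giving full mass to sequences with limsup_{n→+∞} ω_n¹ = +∞, such that for every x ∈ ℝ the pushforwards ((P_v ∘ Θ_x^{-1})_+) converge weakly to Q as v → 0. Then there exists a unique spatially stationary probability law P on Ω such that P_+ = Q, and moreover P_v ∘ Θ_x^{-1} converges weakly to P as v → 0, for every x ∈ ℝ. -/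
open MeasureTheory ProbabilityTheory Filter Real Topology

noncomputable section

/-- The half-line `[-∞, ∞)`, realized as the extended reals without `⊤`,
with the subspace topology and Borel structure. -/
abbrev NT := {x : EReal // x ≠ ⊤}

/-- The space `Ω` of two-sided sequences with values in `[-∞,∞) × E`,
with the product topology. -/
abbrev Om (E : Type*) := ℤ → NT × E

variable {E : Type*} [TopologicalSpace E] [PolishSpace E] [MeasurableSpace E] [BorelSpace E]

/-- The hitting time `T_x(ω) = inf {n ∈ ℤ : ω_n¹ > x}`. -/
def hitT (x : ℝ) (ω : Om E) : ℤ := sInf {n : ℤ | (x : EReal) < ((ω n).1 : EReal)}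

lemma sub_ne_top' (a : NT) (x : ℝ) : (a : EReal) - (x : EReal) ≠ ⊤ := by
  rw [sub_eq_add_neg]
  exact (EReal.add_lt_top a.2 (by simp [EReal.neg_eq_top_iff])).ne

/-- The spatial translation operator `Θ_x(ω) = (ω_{n+T_x}¹ - x, ω_{n+T_x}²)_{n ∈ ℤ}`. -/
def Theta (x : ℝ) (ω : Om E) : Om E := fun n =>
  (⟨((ω (n + hitT x ω)).1 : EReal) - (x : EReal), sub_ne_top' _ _⟩, (ω (n + hitT x ω)).2)

/-- The point `-∞` of `[-∞, ∞)`. -/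
def botNT : NT := ⟨⊥, bot_ne_top⟩

/-- The projection `ω ↦ ω_+` onto `Ω_+`, replacing `ω_n` by `(-∞, ∅)` for `n < 0`. -/
def plusProj (e0 : E) (ω : Om E) : Om E := fun n => if n < 0 then (botNT, e0) else ω n

/-!
A law `P` on `Ω` is recovered from `P_+` by looking from high levels: if the first passage above `x`
happens at time `m` or later, then the coordinates `n ≥ -m` of `Θ_x(ω)` depend on `ω_+` only, and
for `x → ∞` the first passage is eventually later than any `m`. Up to an error
`Q(T_x < m) → 0`, the laws of `Θ_x` under `Q` and under `P_v ∘ Θ_{y-x}⁻¹` can therefore be compared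
on events that depend on the coordinates `n ≥ -m`. This gives uniqueness, tightness of the laws of
`Θ_x` under `Q` as `x → ∞`, and convergence of `P_v ∘ Θ_y⁻¹` to any limit point of them. Although
`Θ_x` is discontinuous at sequences that hit the level `x` exactly, for a given law all but
countably many levels are almost surely not hit, and `x ↦ Θ_x(ω)` is right-continuous; hence
identities between limits pass to every level.
-/

section FirstPassage

variable {X : Type*} {x y : ℝ} {ω η : Om X} {k n T : ℤ}

/-- Subtraction of the real number `x` on `[-∞, ∞)`. -/
def subNT (x : ℝ) (a : NT) : NT := ⟨(a : EReal) - x, sub_ne_top' a x⟩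

theorem subNT_nonneg_iff {a : NT} : (0 : EReal) ≤ subNT x a ↔ (x : EReal) ≤ a :=
  EReal.sub_nonneg (.inr (EReal.coe_ne_top x)) (.inr (EReal.coe_ne_bot x))

theorem lt_subNT_iff {a : NT} : (y : EReal) < subNT x a ↔ ((x + y : ℝ) : EReal) < a := by
  rw [EReal.coe_add, add_comm]
  exact EReal.lt_sub_iff_add_lt (.inr (EReal.coe_ne_top y)) (.inl (EReal.coe_ne_top x))

theorem subNT_subNT (x y : ℝ) (a : NT) : subNT y (subNT x a) = subNT (x + y) a :=
  Subtype.ext <| by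
    simp only [subNT, sub_eq_add_neg, add_assoc, ← EReal.coe_neg, ← EReal.coe_add, neg_add]

/-- The sequence `ω` with time `k` and level `x` moved to the origin; `Θ_x` has this form. -/
def recenter (x : ℝ) (k : ℤ) (ω : Om X) : Om X :=
  fun n => (subNT x (ω (n + k)).1, (ω (n + k)).2)

theorem Theta_eq_recenter (x : ℝ) (ω : Om X) : Theta x ω = recenter x (hitT x ω) ω := rfl

theorem recenter_recenter (x y : ℝ) (k l : ℤ) (ω : Om X) :
    recenter y l (recenter x k ω) = recenter (x + y) (l + k) ω := by
  funext n
  simp only [recenter, subNT_subNT, add_assoc]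

/-- `T` is the first time at which `ω` exceeds the level `x`. -/
def FirstPassage (x : ℝ) (ω : Om X) (T : ℤ) : Prop :=
  IsLeast {n : ℤ | (x : EReal) < (ω n).1} T

/-- The level `x` is exceeded by `ω` for a first time, so that the infimum `hitT x ω` is
attained. -/
def Crosses (x : ℝ) (ω : Om X) : Prop := ∃ T, FirstPassage x ω T

theorem FirstPassage.hitT_eq (h : FirstPassage x ω T) : hitT x ω = T :=
  h.csInf_eq

theorem Crosses.firstPassage_hitT (h : Crosses x ω) : FirstPassage x ω (hitT x ω) := by
  obtain ⟨T, hT⟩ := h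
  rwa [hT.hitT_eq]

theorem int_isLeast_sInf {S : Set ℤ} (hne : S.Nonempty) (hbdd : BddBelow S) : IsLeast S (sInf S) :=
  ⟨Int.csInf_mem hne hbdd, fun _ hn => csInf_le hbdd hn⟩

theorem int_sInf_of_forall_not_isLeast {S : Set ℤ} (h : ∀ n, ¬ IsLeast S n) : sInf S = 0 := by
  rcases S.eq_empty_or_nonempty with rfl | hne
  · exact Int.csInf_empty
  · exact Int.csInf_of_not_bddBelow fun hbdd => h _ (int_isLeast_sInf hne hbdd)

theorem hitT_of_not_crosses (h : ¬ Crosses x ω) : hitT x ω = 0 :=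
  int_sInf_of_forall_not_isLeast fun T hT => h ⟨T, hT⟩

theorem frequently_lt_of_limsup_eq_top
    (htop : limsup (fun n : ℤ => ((ω n).1 : EReal)) atTop = ⊤) (x : ℝ) :
    ∃ᶠ n : ℤ in atTop, (x : EReal) < (ω n).1 :=
  frequently_lt_of_lt_limsup (h := (EReal.coe_lt_top x).trans_eq htop.symm)

theorem crosses_of_tendsto_of_limsup_eq_top
    (hbot : Tendsto (fun n : ℤ => ((ω n).1 : EReal)) atBot (𝓝 ⊥))
    (htop : limsup (fun n : ℤ => ((ω n).1 : EReal)) atTop = ⊤) (x : ℝ) : Crosses x ω := by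
  obtain ⟨b, hb⟩ := eventually_atBot.1 (hbot.eventually_lt_const (EReal.bot_lt_coe x))
  have hbdd : BddBelow {n : ℤ | (x : EReal) < (ω n).1} :=
    ⟨b, fun n hn => not_lt.1 fun hlt => (hb n hlt.le).not_gt hn⟩
  exact ⟨_, int_isLeast_sInf (frequently_lt_of_limsup_eq_top htop x).exists hbdd⟩

theorem firstPassage_recenter :
    FirstPassage y (recenter x k ω) T ↔ FirstPassage (x + y) ω (T + k) := by
  refine and_congr lt_subNT_iff ⟨fun h n hn => ?_, fun h n hn => ?_⟩
  · have hmem : (y : EReal) < (recenter x k ω (n - k)).1 := by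
      rw [recenter, lt_subNT_iff, sub_add_cancel]
      exact hn
    linarith [h hmem]
  · linarith [h (lt_subNT_iff.1 hn)]

theorem Theta_Theta (h : Crosses (x + y) ω) : Theta y (Theta x ω) = Theta (x + y) ω := by
  have hy : FirstPassage y (recenter x (hitT x ω) ω) (hitT (x + y) ω - hitT x ω) :=
    firstPassage_recenter.2 (by rw [sub_add_cancel]; exact h.firstPassage_hitT)
  rw [Theta_eq_recenter x, Theta_eq_recenter y, hy.hitT_eq, recenter_recenter, sub_add_cancel,
    Theta_eq_recenter]

/-- Before time `0` the sequence does not exceed the level `0`, as is the case for `Θ_x(ω)`. On such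
sequences `Θ_x`, for `x ≥ 0`, only involves the first passage from time `0` on. -/
def NonposPast (ω : Om X) : Prop := ∀ n < 0, ((ω n).1 : EReal) ≤ 0

theorem FirstPassage.nonposPast_recenter (h : FirstPassage x ω T) :
    NonposPast (recenter x T ω) := by
  intro n hn
  by_contra! hpos
  have hT : T ≤ n + T := h.2 (by simpa using (lt_subNT_iff (y := 0)).1 hpos)
  linarith

theorem Crosses.nonposPast_Theta (h : Crosses x ω) : NonposPast (Theta x ω) :=
  h.firstPassage_hitT.nonposPast_recenter

theorem Crosses.Theta_zero_nonneg (h : Crosses x ω) : (0 : EReal) ≤ (Theta x ω 0).1 := by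
  refine ((lt_subNT_iff (x := x) (y := 0)).2 ?_).le
  simpa using h.firstPassage_hitT.1

-- If the level `x` is not crossed then `hitT x ω = 0` by convention, so `Θ_x` only subtracts `x`.
theorem le_height_zero_of_not_nonposPast_Theta (h : ¬ NonposPast (Theta x ω))
    (h0 : (0 : EReal) ≤ (Theta x ω 0).1) : (x : EReal) ≤ (ω 0).1 := by
  have hhit : hitT x ω = 0 := hitT_of_not_crosses (mt Crosses.nonposPast_Theta h)
  rw [Theta_eq_recenter, hhit] at h0
  exact subNT_nonneg_iff.1 h0

/-- The first time `n ≥ 0` at which `ω` exceeds the level `x`; it is `0` if there is none. It plays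
the role of `T_x` for sequences on which only the coordinates `n ≥ 0` are controlled. -/
def forwardHit (x : ℝ) (ω : Om X) : ℕ := sInf {n : ℕ | (x : EReal) < (ω n).1}

/-- The level `x` is exceeded at some time `n ≥ 0`. -/
def CrossesForward (x : ℝ) (ω : Om X) : Prop := ∃ n : ℕ, (x : EReal) < (ω n).1

theorem crossesForward_of_limsup_eq_top
    (htop : limsup (fun n : ℤ => ((ω n).1 : EReal)) atTop = ⊤) (x : ℝ) : CrossesForward x ω := by
  obtain ⟨n, hn, hn0⟩ :=
    ((frequently_lt_of_limsup_eq_top htop x).and_eventually (eventually_ge_atTop 0)).exists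
  lift n to ℕ using hn0
  exact ⟨n, hn⟩

/-- The analogue of `Θ_x` for the first passage from time `0` on. It is better behaved than `Θ_x`
because `forwardHit x` is a function of the coordinates `n ≥ 0` only. -/
def forwardShift (x : ℝ) (ω : Om X) : Om X := recenter x (forwardHit x ω) ω

theorem CrossesForward.lt_forwardHit (h : CrossesForward x ω) :
    (x : EReal) < (ω (forwardHit x ω)).1 :=
  Nat.sInf_mem h

theorem forwardHit_of_not_crossesForward (h : ¬ CrossesForward x ω) : forwardHit x ω = 0 :=
  Nat.sInf_eq_zero.2 (.inr (Set.eq_empty_of_forall_notMem (not_exists.1 h)))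

theorem le_of_lt_forwardHit {j : ℕ} (hj : j < forwardHit x ω) : ((ω j).1 : EReal) ≤ x :=
  not_lt.1 (Nat.notMem_of_lt_sInf hj)

theorem forwardHit_eq_iff {j : ℕ} (h : CrossesForward x ω) :
    forwardHit x ω = j ↔ (x : EReal) < (ω j).1 ∧ ∀ i < j, ((ω i).1 : EReal) ≤ x := by
  constructor
  · rintro rfl
    exact ⟨h.lt_forwardHit, fun i => le_of_lt_forwardHit⟩
  · rintro ⟨hj, hlt⟩
    exact (Nat.sInf_le hj).antisymm (not_lt.1 fun hj' => (hlt _ hj').not_gt h.lt_forwardHit)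

theorem NonposPast.firstPassage_forwardHit (hω : NonposPast ω) (hx : 0 ≤ x)
    (h : CrossesForward x ω) : FirstPassage x ω (forwardHit x ω) := by
  refine ⟨h.lt_forwardHit, fun n (hn : (x : EReal) < (ω n).1) => ?_⟩
  have hn0 : 0 ≤ n := by
    by_contra! hneg
    exact (hω n hneg).not_gt ((EReal.coe_nonneg.2 hx).trans_lt hn)
  lift n to ℕ using hn0
  exact_mod_cast Nat.sInf_le hn

theorem NonposPast.crosses_iff (hω : NonposPast ω) (hx : 0 ≤ x) :
    Crosses x ω ↔ CrossesForward x ω := by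
  refine ⟨fun ⟨T, hT⟩ => ?_, fun h => ⟨_, hω.firstPassage_forwardHit hx h⟩⟩
  have hT0 : 0 ≤ T := by
    by_contra! hneg
    exact (hω T hneg).not_gt ((EReal.coe_nonneg.2 hx).trans_lt hT.1)
  lift T to ℕ using hT0
  exact ⟨T, hT.1⟩

theorem NonposPast.Theta_eq_forwardShift (hω : NonposPast ω) (hx : 0 ≤ x) :
    Theta x ω = forwardShift x ω := by
  rw [Theta_eq_recenter, forwardShift]
  congr 1
  by_cases h : CrossesForward x ω
  · exact (hω.firstPassage_forwardHit hx h).hitT_eq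
  · rw [hitT_of_not_crosses (mt (hω.crosses_iff hx).1 h), forwardHit_of_not_crossesForward h,
      Nat.cast_zero]

variable {e0 : X}

theorem plusProj_of_nonneg (hn : 0 ≤ n) : plusProj e0 ω n = ω n :=
  if_neg hn.not_gt

theorem plusProj_of_neg (hn : n < 0) : plusProj e0 ω n = (botNT, e0) :=
  if_pos hn

theorem plusProj_congr (h : ∀ n, 0 ≤ n → ω n = η n) : plusProj e0 ω = plusProj e0 η := by
  funext n
  rcases lt_or_ge n 0 with hn | hn
  · rw [plusProj_of_neg hn, plusProj_of_neg hn]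
  · rw [plusProj_of_nonneg hn, plusProj_of_nonneg hn, h n hn]

theorem plusProj_plusProj (e0 : X) (ω : Om X) : plusProj e0 (plusProj e0 ω) = plusProj e0 ω :=
  plusProj_congr fun _ hn => plusProj_of_nonneg hn

theorem nonposPast_plusProj (e0 : X) (ω : Om X) : NonposPast (plusProj e0 ω) := fun n hn => by
  rw [plusProj_of_neg hn]
  exact bot_le

theorem forwardHit_plusProj (e0 : X) (x : ℝ) (ω : Om X) :
    forwardHit x (plusProj e0 ω) = forwardHit x ω := by
  simp only [forwardHit, plusProj_of_nonneg (Int.natCast_nonneg _)]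

theorem crossesForward_plusProj : CrossesForward x (plusProj e0 ω) ↔ CrossesForward x ω := by
  simp only [CrossesForward, plusProj_of_nonneg (Int.natCast_nonneg _)]

theorem forwardShift_plusProj_apply (hn : -(forwardHit x ω : ℤ) ≤ n) :
    forwardShift x (plusProj e0 ω) n = forwardShift x ω n := by
  simp only [forwardShift, recenter, forwardHit_plusProj]
  rw [plusProj_of_nonneg (by linarith)]

theorem plusProj_forwardShift_plusProj (e0 : X) (x : ℝ) (ω : Om X) :
    plusProj e0 (forwardShift x (plusProj e0 ω)) = plusProj e0 (forwardShift x ω) :=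
  plusProj_congr fun _ hn => forwardShift_plusProj_apply ((neg_nonpos.2 (by positivity)).trans hn)

/-- The event that `forwardShift x ω` lies in `A` and the first passage above `x` from time `0` on
happens at time `m` or later. If `A` depends on the coordinates `n ≥ -m` only, this event depends
on `ω_+` only. -/
def lateEvent (x : ℝ) (m : ℕ) (A : Set (Om X)) : Set (Om X) :=
  {ω | m ≤ forwardHit x ω ∧ forwardShift x ω ∈ A}

theorem lateEvent_subset (x : ℝ) (m : ℕ) (A : Set (Om X)) :
    lateEvent x m A ⊆ forwardShift x ⁻¹' A :=
  fun _ h => h.2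

theorem preimage_forwardShift_subset (x : ℝ) (m : ℕ) (A : Set (Om X)) :
    forwardShift x ⁻¹' A ⊆ lateEvent x m A ∪ {ω | forwardHit x ω < m} :=
  fun ω hω => (le_or_gt m (forwardHit x ω)).imp (⟨·, hω⟩) id

theorem plusProj_preimage_lateEvent {m : ℕ} {A : Set (Om X)}
    (hA : DependsOn (· ∈ A) (Set.Ici (-(m : ℤ)))) (e0 : X) (x : ℝ) :
    plusProj e0 ⁻¹' lateEvent x m A = lateEvent x m A := by
  ext ω
  simp only [lateEvent, Set.mem_preimage, Set.mem_ofPred_eq, forwardHit_plusProj]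
  refine and_congr_right fun hm => iff_of_eq (hA fun n hn => forwardShift_plusProj_apply ?_)
  have hn' : -(m : ℤ) ≤ n := hn
  omega

theorem eventually_le_forwardHit (hω : ∀ x, CrossesForward x ω) (m : ℕ) :
    ∀ᶠ x in atTop, m ≤ forwardHit x ω := by
  have hlevels : ∀ᶠ x : ℝ in atTop, ∀ j < m, ((ω j).1 : EReal) ≤ x := by
    refine (Set.finite_lt_nat m).eventually_all.2 fun j _ => ?_
    filter_upwards [eventually_ge_atTop ((ω j).1 : EReal).toReal] with x hx
    exact (EReal.le_coe_toReal (ω j).1.2).trans (EReal.coe_le_coe_iff.2 hx)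
  filter_upwards [hlevels] with x hx
  by_contra! hlt
  exact (hx _ hlt).not_gt (hω x).lt_forwardHit

end FirstPassage

section Continuity

variable {X : Type*} [TopologicalSpace X] {x : ℝ} {ω : Om X}

theorem continuous_subNT : Continuous fun p : ℝ × NT => subNT p.1 p.2 := by
  refine Continuous.subtype_mk (continuous_iff_continuousAt.2 fun p => ?_) _
  simp only [sub_eq_add_neg, ← EReal.coe_neg]
  have hpair : Continuous fun p : ℝ × NT => ((p.2 : EReal), ((-p.1 : ℝ) : EReal)) :=
    (continuous_subtype_val.comp continuous_snd).prodMk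
      (continuous_coe_real_ereal.comp continuous_fst.neg)
  exact (EReal.continuousAt_add (.inl p.2.2) (.inr (EReal.coe_ne_top _))).comp
    hpair.continuousAt

theorem continuous_recenter (k : ℤ) : Continuous fun p : ℝ × Om X => recenter p.1 k p.2 :=
  continuous_pi fun n => (continuous_subNT.comp
    (continuous_fst.prodMk (by fun_prop : Continuous fun p : ℝ × Om X => (p.2 (n + k)).1))).prodMk
      (by fun_prop)

theorem continuous_plusProj (e0 : X) : Continuous (plusProj e0) :=
  continuous_pi fun n => by
    rcases lt_or_ge n 0 with hn | hn
    · simpa only [plusProj_of_neg hn] using continuous_const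
    · simpa only [plusProj_of_nonneg hn] using continuous_apply n

theorem continuous_height (n : ℤ) : Continuous fun ω : Om X => ((ω n).1 : EReal) := by
  fun_prop

theorem isClosed_nonposPast : IsClosed {ω : Om X | NonposPast ω} := by
  simp only [NonposPast, Set.ofPred_forall]
  exact isClosed_iInter fun n => isClosed_iInter fun _ =>
    isClosed_le (continuous_height n) continuous_const

theorem eventually_forwardHit_eq (hω : CrossesForward x ω)
    (hne : ∀ j : ℕ, ((ω j).1 : EReal) ≠ x) :
    ∀ᶠ η in 𝓝 ω, forwardHit x η = forwardHit x ω := by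
  have habove : ∀ᶠ η : Om X in 𝓝 ω, (x : EReal) < (η (forwardHit x ω)).1 :=
    (continuous_height _).continuousAt.eventually (lt_mem_nhds hω.lt_forwardHit)
  have hbelow : ∀ᶠ η : Om X in 𝓝 ω, ∀ i < forwardHit x ω, ((η i).1 : EReal) < x :=
    (Set.finite_lt_nat _).eventually_all.2 fun i hi =>
      (continuous_height _).continuousAt.eventually
        (gt_mem_nhds ((le_of_lt_forwardHit hi).lt_of_ne (hne i)))
  filter_upwards [habove, hbelow] with η hη hη'
  exact (forwardHit_eq_iff ⟨_, hη⟩).2 ⟨hη, fun i hi => (hη' i hi).le⟩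

theorem continuousAt_forwardShift (hω : CrossesForward x ω)
    (hne : ∀ j : ℕ, ((ω j).1 : EReal) ≠ x) : ContinuousAt (forwardShift x) ω := by
  have hcont : Continuous (recenter (X := X) x (forwardHit x ω)) :=
    (continuous_recenter _).comp (continuous_const.prodMk continuous_id)
  refine hcont.continuousAt.congr ?_
  filter_upwards [eventually_forwardHit_eq hω hne] with η hη
  rw [forwardShift, hη]

theorem tendsto_forwardShift_nhdsGT (hω : CrossesForward x ω) :
    Tendsto (fun z => forwardShift z ω) (𝓝[>] x) (𝓝 (forwardShift x ω)) := by
  have hcont : Continuous fun z => recenter z (forwardHit x ω) ω :=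
    (continuous_recenter _).comp (continuous_id.prodMk continuous_const)
  refine (hcont.continuousAt.tendsto.mono_left nhdsWithin_le_nhds).congr' ?_
  have hlt : ∀ᶠ z : ℝ in 𝓝[>] x, (z : EReal) < (ω (forwardHit x ω)).1 :=
    nhdsWithin_le_nhds <| continuous_coe_real_ereal.continuousAt.eventually
      (gt_mem_nhds hω.lt_forwardHit)
  filter_upwards [hlt, self_mem_nhdsWithin] with z hz hxz
  rw [forwardShift, (forwardHit_eq_iff ⟨_, hz⟩).2 ⟨hz, fun i hi =>
    (le_of_lt_forwardHit hi).trans (EReal.coe_le_coe_iff.2 (le_of_lt hxz))⟩]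

theorem mem_nhds_lateEvent {m : ℕ} {A : Set (Om X)} (hA : IsOpen A) (hω : CrossesForward x ω)
    (hne : ∀ j : ℕ, ((ω j).1 : EReal) ≠ x) (hmem : ω ∈ lateEvent x m A) :
    lateEvent x m A ∈ 𝓝 ω := by
  filter_upwards [eventually_forwardHit_eq hω hne,
    (continuousAt_forwardShift hω hne).eventually (hA.mem_nhds hmem.2)] with η hη hη'
  exact ⟨hη ▸ hmem.1, hη'⟩

theorem exists_monotone_isOpen_dependsOn {G : Set (Om X)} (hG : IsOpen G) :
    ∃ W : ℕ → Set (Om X), Monotone W ∧ ⋃ m, W m = G ∧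
      ∀ m, IsOpen (W m) ∧ DependsOn (· ∈ W m) (Set.Ici (-(m : ℤ))) := by
  let W (m : ℕ) : Set (Om X) :=
    ⋃₀ {U | IsOpen U ∧ DependsOn (· ∈ U) (Set.Ici (-(m : ℤ))) ∧ U ⊆ G}
  refine ⟨W, fun m m' h => ?_, ?_, fun m => ⟨isOpen_sUnion fun U hU => hU.1, fun ω η h => ?_⟩⟩
  · refine Set.sUnion_subset_sUnion fun U hU => ⟨hU.1, hU.2.1.mono ?_, hU.2.2⟩
    exact Set.Ici_subset_Ici.2 (by omega)
  · refine (Set.iUnion_subset fun m => Set.sUnion_subset fun U hU => hU.2.2).antisymm fun ω hω => ?_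
    obtain ⟨I, u, hu, hsub⟩ := isOpen_pi_iff.1 hG ω hω
    obtain ⟨m, hm⟩ : ∃ m : ℕ, ∀ n ∈ I, -(m : ℤ) ≤ n :=
      ⟨I.sup Int.natAbs, fun n hn => by have := Finset.le_sup (f := Int.natAbs) hn; omega⟩
    have hdep : DependsOn (· ∈ (I : Set ℤ).pi u) (Set.Ici (-(m : ℤ))) := fun η η' h =>
      propext (forall₂_congr fun n hn => by rw [h n (hm n hn)])
    exact Set.mem_iUnion.2 ⟨m, _, ⟨isOpen_set_pi I.finite_toSet fun n hn => (hu n hn).1, hdep,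
      hsub⟩, fun n hn => (hu n hn).2⟩
  · simp only [W, Set.mem_sUnion]
    exact propext (exists_congr fun U => and_congr_right fun hU => iff_of_eq (hU.2.1 h))

end Continuity

section Measurability

theorem measurable_isLeast {ι : Type*} [Preorder ι] [Countable ι] (n : ι) :
    Measurable fun S : Set ι => IsLeast S n :=
  (measurable_set_mem n).and <| .forall fun k => (measurable_set_mem k).imp measurable_const

theorem measurable_of_isLeast {ι : Type*} [PartialOrder ι] [Countable ι] [MeasurableSpace ι]
    {f : Set ι → ι} {c : ι} (hf : ∀ S n, IsLeast S n → f S = n)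
    (hc : ∀ S, (∀ n, ¬ IsLeast S n) → f S = c) : Measurable f := by
  have hiff (S : Set ι) (n : ι) : f S = n ↔ IsLeast S n ∨ (∀ k, ¬ IsLeast S k) ∧ c = n := by
    by_cases h : ∃ k, IsLeast S k
    · obtain ⟨k, hk⟩ := h
      rw [hf S k hk]
      exact ⟨fun hkn => .inl (hkn ▸ hk), fun h => h.elim hk.unique fun h => (h.1 k hk).elim⟩
    · rw [hc S (not_exists.1 h)]
      exact ⟨fun hcn => .inr ⟨not_exists.1 h, hcn⟩, fun h' => h'.elim (fun h' => (h ⟨n, h'⟩).elim)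
        And.right⟩
  refine measurable_to_countable' fun n => measurableSet_setOfPred.2 ?_
  simp only [Set.mem_singleton_iff, hiff]
  exact (measurable_isLeast n).or
    ((Measurable.forall fun k => (measurable_isLeast k).not).and measurable_const)

theorem measurable_int_sInf : Measurable (sInf : Set ℤ → ℤ) :=
  measurable_of_isLeast (fun _ _ h => h.csInf_eq) fun _ => int_sInf_of_forall_not_isLeast

theorem measurable_nat_sInf : Measurable (sInf : Set ℕ → ℕ) :=
  measurable_of_isLeast (fun _ _ h => h.csInf_eq) fun S hS => Nat.sInf_eq_zero.2 <| .inr <|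
    S.eq_empty_or_nonempty.resolve_right fun hne =>
      hS _ ⟨Nat.sInf_mem hne, fun _ => Nat.sInf_le⟩

variable {X : Type*} [MeasurableSpace X]

theorem measurable_height (n : ℤ) : Measurable fun ω : Om X => ((ω n).1 : EReal) := by
  fun_prop

theorem measurable_exceeds (x : ℝ) (n : ℤ) :
    Measurable fun ω : Om X => (x : EReal) < (ω n).1 :=
  measurableSet_setOfPred.1 (measurableSet_lt measurable_const (measurable_height n))

theorem measurableSet_nonposPast : MeasurableSet {ω : Om X | NonposPast ω} :=
  measurableSet_setOfPred.2 <| .forall fun n => measurable_const.imp <|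
    measurableSet_setOfPred.1 (measurableSet_le (measurable_height n) measurable_const)

theorem measurableSet_crosses (x : ℝ) : MeasurableSet {ω : Om X | Crosses x ω} :=
  measurableSet_setOfPred.2 <| .exists fun T =>
    (measurable_isLeast T).comp (measurable_set_iff.2 (measurable_exceeds x))

theorem measurableSet_crossesForward (x : ℝ) : MeasurableSet {ω : Om X | CrossesForward x ω} :=
  measurableSet_setOfPred.2 <| .exists fun n : ℕ => measurable_exceeds x n

theorem measurable_hitT (x : ℝ) : Measurable (hitT (E := X) x) :=
  measurable_int_sInf.comp <| measurable_set_iff.2 (measurable_exceeds x)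

theorem measurable_forwardHit (x : ℝ) : Measurable (forwardHit (X := X) x) :=
  measurable_nat_sInf.comp <| measurable_set_iff.2 fun n : ℕ => measurable_exceeds x n

theorem measurable_recenter (x : ℝ) : Measurable fun p : ℤ × Om X => recenter x p.1 p.2 :=
  measurable_from_prod_countable_right fun k => measurable_pi_lambda _ fun n =>
    ((continuous_subNT.comp (Continuous.prodMk_right x)).measurable.comp
      (measurable_fst.comp (measurable_pi_apply (n + k)))).prodMk
        (measurable_snd.comp (measurable_pi_apply (n + k)))

theorem measurable_Theta (x : ℝ) : Measurable (Theta (E := X) x) :=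
  (measurable_recenter x).comp ((measurable_hitT x).prodMk measurable_id)

theorem measurable_forwardShift (x : ℝ) : Measurable (forwardShift (X := X) x) :=
  (measurable_recenter x).comp
    ((measurable_from_nat.comp (measurable_forwardHit x)).prodMk measurable_id)

theorem measurable_plusProj (e0 : X) : Measurable (plusProj e0) :=
  measurable_pi_lambda _ fun n => by
    rcases lt_or_ge n 0 with hn | hn
    · simpa only [plusProj_of_neg hn] using measurable_const
    · simpa only [plusProj_of_nonneg hn] using measurable_pi_apply n

theorem measurableSet_lateEvent (x : ℝ) (m : ℕ) {A : Set (Om X)} (hA : MeasurableSet A) :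
    MeasurableSet (lateEvent x m A) :=
  (measurableSet_le measurable_const (measurable_forwardHit x)).inter
    (measurable_forwardShift x hA)

end Measurability

section WeakConvergence

variable {Ω Ω' ι : Type*} [MeasurableSpace Ω] [TopologicalSpace Ω] {L : Filter ι}

theorem measure_le_liminf_of_ae_mem_nhds [OpensMeasurableSpace Ω] [HasOuterApproxClosed Ω]
    {μ : ProbabilityMeasure Ω} {μs : ι → ProbabilityMeasure Ω} (hμ : Tendsto μs L (𝓝 μ))
    {A : Set Ω} (hA : ∀ᵐ ω ∂(μ : Measure Ω), ω ∈ A → A ∈ 𝓝 ω) :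
    (μ : Measure Ω) A ≤ L.liminf fun i => (μs i : Measure Ω) A :=
  calc (μ : Measure Ω) A ≤ (μ : Measure Ω) (interior A) :=
        measure_mono_ae <| hA.mono fun _ h hω => mem_interior_iff_mem_nhds.2 (h hω)
    _ ≤ L.liminf fun i => (μs i : Measure Ω) (interior A) :=
        ProbabilityMeasure.le_liminf_measure_open_of_tendsto hμ isOpen_interior
    _ ≤ L.liminf fun i => (μs i : Measure Ω) A :=
        liminf_le_liminf (.of_forall fun _ => measure_mono interior_subset)

theorem ae_mem_of_tendsto_of_isClosed [OpensMeasurableSpace Ω] [HasOuterApproxClosed Ω] [L.NeBot]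
    {μ : ProbabilityMeasure Ω} {μs : ι → ProbabilityMeasure Ω} (hμ : Tendsto μs L (𝓝 μ))
    {F : Set Ω} (hF : IsClosed F) (hμs : ∀ i, ∀ᵐ ω ∂(μs i : Measure Ω), ω ∈ F) :
    ∀ᵐ ω ∂(μ : Measure Ω), ω ∈ F := by
  refine nonpos_iff_eq_zero.1 <|
    (ProbabilityMeasure.le_liminf_measure_open_of_tendsto hμ hF.isOpen_compl).trans ?_
  have hzero (i : ι) : (μs i : Measure Ω) Fᶜ = 0 := hμs i
  simp only [hzero, liminf_const, le_refl]

theorem tendsto_map_of_ae_continuousAt [OpensMeasurableSpace Ω] [HasOuterApproxClosed Ω]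
    [MeasurableSpace Ω'] [TopologicalSpace Ω'] [BorelSpace Ω']
    [L.IsCountablyGenerated] {μ : ProbabilityMeasure Ω} {μs : ι → ProbabilityMeasure Ω}
    (hμ : Tendsto μs L (𝓝 μ)) {f : Ω → Ω'} (hf : Measurable f)
    (hcont : ∀ᵐ ω ∂(μ : Measure Ω), ContinuousAt f ω) :
    Tendsto (fun i => (μs i).map hf.aemeasurable) L (𝓝 (μ.map hf.aemeasurable)) := by
  refine tendsto_of_forall_isOpen_le_liminf' fun G hG => ?_
  simp only [ProbabilityMeasure.toMeasure_map, Measure.map_apply hf hG.measurableSet]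
  exact measure_le_liminf_of_ae_mem_nhds hμ <|
    hcont.mono fun ω h hω => h.preimage_mem_nhds (hG.mem_nhds hω)

theorem dense_ae_forall_ne [Countable ι] {Ω : Type*} [MeasurableSpace Ω] {μ : Measure Ω} [SFinite μ]
    {f : ι → Ω → EReal} (hf : ∀ j, Measurable (f j)) :
    Dense {x : ℝ | ∀ᵐ ω ∂μ, ∀ j, f j ω ≠ x} := by
  have hatoms : (⋃ j, {x : ℝ | 0 < μ {ω | f j ω = x}}).Countable :=
    Set.countable_iUnion fun j => (Measure.countable_meas_level_set_pos (hf j)).preimage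
      EReal.coe_injective
  refine (hatoms.dense_compl ℝ).mono fun x hx => ae_all_iff.2 fun j => ?_
  have hzero : ¬ 0 < μ {ω | f j ω = x} := fun h => hx (Set.mem_iUnion.2 ⟨j, h⟩)
  simpa [ae_iff] using hzero

theorem isTightMeasureSet_of_forall_le_add [BorelSpace Ω] [PolishSpace Ω] {S : Set (Measure Ω)}
    (hS : ∀ ε : ENNReal, 0 < ε → ∃ ρ : Measure Ω, IsFiniteMeasure ρ ∧
      ∀ μ ∈ S, ∀ A, MeasurableSet A → μ A ≤ ρ A + ε) : IsTightMeasureSet S := by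
  rw [isTightMeasureSet_iff_exists_isCompact_measure_compl_le]
  intro ε hε
  have hε2 : 0 < ε / 2 := ENNReal.half_pos hε.ne'
  obtain ⟨ρ, _, hρ⟩ := hS (ε / 2) hε2
  obtain ⟨K, hK, hρK⟩ := isTightMeasureSet_iff_exists_isCompact_measure_compl_le.1
    (isTightMeasureSet_singleton (μ := ρ)) (ε / 2) hε2
  refine ⟨K, hK, fun μ hμ => (hρ μ hμ Kᶜ hK.measurableSet.compl).trans ?_⟩
  exact (add_le_add_left (hρK ρ rfl) _).trans (ENNReal.add_halves ε).le

theorem isTightMeasureSet_pi [Countable ι] {Y : ι → Type*} [∀ i, MeasurableSpace (Y i)]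
    [∀ i, TopologicalSpace (Y i)] [∀ i, T2Space (Y i)] [∀ i, OpensMeasurableSpace (Y i)]
    {S : Set (Measure (∀ i, Y i))}
    (hS : ∀ i, IsTightMeasureSet (Measure.map (fun y : ∀ i, Y i => y i) '' S)) :
    IsTightMeasureSet S := by
  simp only [isTightMeasureSet_iff_exists_isCompact_measure_compl_le, Set.forall_mem_image] at hS ⊢
  intro ε hε
  obtain ⟨δ, hδ, hsum⟩ := ENNReal.exists_pos_sum_of_countable' hε.ne' ι
  choose K hK hKδ using fun i => hS i (δ i) (hδ i)
  refine ⟨Set.univ.pi K, isCompact_univ_pi hK, fun μ hμ => ?_⟩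
  calc μ (Set.univ.pi K)ᶜ ≤ μ (⋃ i, (fun y : ∀ i, Y i => y i) ⁻¹' (K i)ᶜ) :=
        measure_mono fun y hy => by simpa [Set.mem_pi] using hy
    _ ≤ ∑' i, μ ((fun y : ∀ i, Y i => y i) ⁻¹' (K i)ᶜ) := measure_iUnion_le _
    _ ≤ ∑' i, δ i := ENNReal.tsum_le_tsum fun i => by
        rw [← Measure.map_apply (measurable_pi_apply i) (hK i).measurableSet.compl]
        exact hKδ i hμ
    _ ≤ ε := hsum.le

end WeakConvergence

instance instPolishSpaceNT : PolishSpace NT :=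
  (isOpen_compl_singleton (x := (⊤ : EReal))).polishSpace

section Laws

variable {X : Type*} [MeasurableSpace X] {x y : ℝ} {e0 : X} {μ ν Q : ProbabilityMeasure (Om X)}

/-- The law of `Θ_x(ω)` when `ω` has law `μ`. -/
def shiftLaw (x : ℝ) (μ : ProbabilityMeasure (Om X)) : ProbabilityMeasure (Om X) :=
  μ.map (measurable_Theta x).aemeasurable

/-- The law of `forwardShift x ω` when `ω` has law `μ`. -/
def forwardLaw (x : ℝ) (μ : ProbabilityMeasure (Om X)) : ProbabilityMeasure (Om X) :=
  μ.map (measurable_forwardShift x).aemeasurable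

/-- The law of `ω_+` when `ω` has law `μ`. -/
def plusLaw (e0 : X) (μ : ProbabilityMeasure (Om X)) : ProbabilityMeasure (Om X) :=
  μ.map (measurable_plusProj e0).aemeasurable

theorem shiftLaw_shiftLaw (h : ∀ᵐ ω ∂(μ : Measure (Om X)), Crosses (x + y) ω) :
    shiftLaw y (shiftLaw x μ) = shiftLaw (x + y) μ :=
  ProbabilityMeasure.toMeasure_injective <|
    (Measure.map_map (measurable_Theta y) (measurable_Theta x)).trans <|
      Measure.map_congr <| h.mono fun _ => Theta_Theta

theorem shiftLaw_eq_forwardLaw (hμ : ∀ᵐ ω ∂(μ : Measure (Om X)), NonposPast ω) (hx : 0 ≤ x) :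
    shiftLaw x μ = forwardLaw x μ :=
  ProbabilityMeasure.toMeasure_injective <|
    Measure.map_congr <| hμ.mono fun _ hω => hω.Theta_eq_forwardShift hx

theorem forwardLaw_shiftLaw (hy : 0 ≤ y) (hx : ∀ᵐ ω ∂(μ : Measure (Om X)), Crosses x ω)
    (hxy : ∀ᵐ ω ∂(μ : Measure (Om X)), Crosses (x + y) ω) :
    forwardLaw y (shiftLaw x μ) = shiftLaw (x + y) μ := by
  refine ProbabilityMeasure.toMeasure_injective <|
    (Measure.map_map (measurable_forwardShift y) (measurable_Theta x)).trans <|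
      Measure.map_congr ?_
  filter_upwards [hx, hxy] with ω hω hω'
  rw [Function.comp_apply, ← hω.nonposPast_Theta.Theta_eq_forwardShift hy, Theta_Theta hω']

theorem forwardLaw_forwardLaw (hx : 0 ≤ x) (hy : 0 ≤ y)
    (hpast : ∀ᵐ ω ∂(μ : Measure (Om X)), NonposPast ω)
    (hμ : ∀ z, ∀ᵐ ω ∂(μ : Measure (Om X)), CrossesForward z ω) :
    forwardLaw y (forwardLaw x μ) = forwardLaw (x + y) μ := by
  have hcross (z : ℝ) (hz : 0 ≤ z) : ∀ᵐ ω ∂(μ : Measure (Om X)), Crosses z ω := by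
    filter_upwards [hpast, hμ z] with ω hω h using (hω.crosses_iff hz).2 h
  rw [← shiftLaw_eq_forwardLaw hpast hx, ← shiftLaw_eq_forwardLaw hpast (add_nonneg hx hy),
    forwardLaw_shiftLaw hy (hcross _ hx) (hcross _ (add_nonneg hx hy))]

theorem plusLaw_plusLaw (e0 : X) (μ : ProbabilityMeasure (Om X)) :
    plusLaw e0 (plusLaw e0 μ) = plusLaw e0 μ :=
  ProbabilityMeasure.toMeasure_injective <|
    (Measure.map_map (measurable_plusProj e0) (measurable_plusProj e0)).trans <|
      congrArg (Measure.map · (μ : Measure (Om X))) (funext (plusProj_plusProj e0))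

theorem plusLaw_forwardLaw_plusLaw (e0 : X) (x : ℝ) (μ : ProbabilityMeasure (Om X)) :
    plusLaw e0 (forwardLaw x (plusLaw e0 μ)) = plusLaw e0 (forwardLaw x μ) := by
  refine ProbabilityMeasure.toMeasure_injective ?_
  simp only [plusLaw, forwardLaw, ProbabilityMeasure.toMeasure_map]
  have hmeas := (measurable_plusProj e0).comp (measurable_forwardShift x)
  rw [Measure.map_map (measurable_plusProj e0) (measurable_forwardShift x),
    Measure.map_map hmeas (measurable_plusProj e0),
    Measure.map_map (measurable_plusProj e0) (measurable_forwardShift x)]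
  exact congrArg (Measure.map · (μ : Measure (Om X))) (funext (plusProj_forwardShift_plusProj e0 x))

theorem measure_eq_of_plusLaw_eq (h : plusLaw e0 μ = plusLaw e0 ν) {A : Set (Om X)}
    (hA : MeasurableSet A) (hplus : plusProj e0 ⁻¹' A = A) :
    (μ : Measure (Om X)) A = (ν : Measure (Om X)) A := by
  have hmap : (μ : Measure (Om X)).map (plusProj e0) A = (ν : Measure (Om X)).map (plusProj e0) A :=
    congrArg (fun ρ : ProbabilityMeasure (Om X) => (ρ : Measure (Om X)) A) h
  rwa [Measure.map_apply (measurable_plusProj e0) hA, hplus,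
    Measure.map_apply (measurable_plusProj e0) hA, hplus] at hmap

theorem forwardLaw_apply {A : Set (Om X)} (hA : MeasurableSet A) :
    (forwardLaw x μ : Measure (Om X)) A = (μ : Measure (Om X)) (forwardShift x ⁻¹' A) :=
  Measure.map_apply (measurable_forwardShift x) hA

theorem measure_lateEvent_le_forwardLaw {m : ℕ} {A : Set (Om X)} (hA : MeasurableSet A) :
    (μ : Measure (Om X)) (lateEvent x m A) ≤ (forwardLaw x μ : Measure (Om X)) A := by
  rw [forwardLaw_apply hA]
  exact measure_mono (lateEvent_subset x m A)

theorem forwardLaw_le_measure_lateEvent_add {m : ℕ} {A : Set (Om X)} (hA : MeasurableSet A) :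
    (forwardLaw x μ : Measure (Om X)) A ≤ (μ : Measure (Om X)) (lateEvent x m A) +
      (μ : Measure (Om X)) {ω | forwardHit x ω < m} := by
  rw [forwardLaw_apply hA]
  exact (measure_mono (preimage_forwardShift_subset x m A)).trans (measure_union_le _ _)

theorem forwardLaw_le_add_of_plusLaw_eq (h : plusLaw e0 μ = plusLaw e0 ν) (x : ℝ) {m : ℕ}
    {A : Set (Om X)} (hA : MeasurableSet A) (hdep : DependsOn (· ∈ A) (Set.Ici (-(m : ℤ)))) :
    (forwardLaw x μ : Measure (Om X)) A ≤ (forwardLaw x ν : Measure (Om X)) A +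
      (ν : Measure (Om X)) {ω | forwardHit x ω < m} := by
  refine (forwardLaw_le_measure_lateEvent_add (m := m) hA).trans (add_le_add ?_ (le_of_eq ?_))
  · rw [measure_eq_of_plusLaw_eq h (measurableSet_lateEvent x m hA)
      (plusProj_preimage_lateEvent hdep e0 x)]
    exact measure_lateEvent_le_forwardLaw hA
  · exact measure_eq_of_plusLaw_eq h
      (measurableSet_lt (measurable_forwardHit x) measurable_const)
      (by simp only [Set.preimage_ofPred_eq, forwardHit_plusProj])

theorem tendsto_measure_of_forall_ae_eventually_notMem {Ω ι : Type*} [MeasurableSpace Ω]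
    {μ : Measure Ω} [IsFiniteMeasure μ] {L : Filter ι} [L.IsCountablyGenerated] {A : ι → Set Ω}
    (hA : ∀ i, MeasurableSet (A i)) (h : ∀ᵐ ω ∂μ, ∀ᶠ i in L, ω ∉ A i) :
    Tendsto (fun i => μ (A i)) L (𝓝 0) := by
  rw [← measure_empty (μ := μ)]
  exact tendsto_measure_of_ae_tendsto_indicator_of_isFiniteMeasure L .empty hA
    (h.mono fun ω hω => hω.mono fun i hi => iff_of_false hi (Set.notMem_empty ω))

theorem tendsto_measure_forwardHit_lt
    (hμ : ∀ z, ∀ᵐ ω ∂(μ : Measure (Om X)), CrossesForward z ω) (m : ℕ) :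
    Tendsto (fun x => (μ : Measure (Om X)) {ω | forwardHit x ω < m}) atTop (𝓝 0) := by
  refine tendsto_measure_of_forall_ae_eventually_notMem
    (fun x => measurableSet_lt (measurable_forwardHit x) measurable_const) ?_
  have hall : ∀ᵐ ω ∂(μ : Measure (Om X)), ∀ k : ℕ, CrossesForward k ω := ae_all_iff.2 fun k => hμ k
  filter_upwards [hall] with ω hω
  have hω' (x : ℝ) : CrossesForward x ω := by
    obtain ⟨k, hk⟩ := exists_nat_ge x
    exact (hω k).imp fun n hn => (EReal.coe_le_coe_iff.2 hk).trans_lt hn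
  filter_upwards [eventually_le_forwardHit hω' m] with x hx using not_lt.2 hx

theorem dense_ae_height_ne (μ : Measure (Om X)) [SFinite μ] :
    Dense {x : ℝ | ∀ᵐ ω ∂μ, ∀ j : ℕ, ((ω j).1 : EReal) ≠ x} :=
  dense_ae_forall_ne fun j : ℕ => measurable_height (j : ℤ)

theorem exists_levels_tendsto_atTop (μ : Measure (Om X)) [SFinite μ] :
    ∃ κ : ℕ → ℝ, (∀ k, 0 ≤ κ k) ∧ Tendsto κ atTop atTop ∧
      ∀ k, ∀ᵐ ω ∂μ, ∀ j : ℕ, ((ω j).1 : EReal) ≠ κ k := by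
  choose κ hne hlt _ using fun k : ℕ => (dense_ae_height_ne μ).exists_between (lt_add_one (k : ℝ))
  exact ⟨κ, fun k => (Nat.cast_nonneg k).trans (hlt k).le,
    tendsto_atTop_mono (fun k => (hlt k).le) tendsto_natCast_atTop_atTop, hne⟩

/-- Invariance under passing to a higher level and forgetting the coordinates `n < 0`: this is the
trace on `Ω_+` of spatial stationarity. -/
def ForwardInvariant (e0 : X) (Q : ProbabilityMeasure (Om X)) : Prop :=
  ∀ x, 0 ≤ x → plusLaw e0 (forwardLaw x Q) = Q

theorem ForwardInvariant.plusLaw_eq (hQ : ForwardInvariant e0 Q) : plusLaw e0 Q = Q := by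
  rw [← hQ 0 le_rfl, plusLaw_plusLaw]

theorem ForwardInvariant.ae_nonposPast (hQ : ForwardInvariant e0 Q) :
    ∀ᵐ ω ∂(Q : Measure (Om X)), NonposPast ω := by
  rw [← hQ 0 le_rfl]
  exact (ae_map_iff (measurable_plusProj e0).aemeasurable measurableSet_nonposPast).2
    (.of_forall (nonposPast_plusProj e0))

theorem ForwardInvariant.forwardLaw_le_add (hQ : ForwardInvariant e0 Q)
    (hcross : ∀ z, ∀ᵐ ω ∂(Q : Measure (Om X)), CrossesForward z ω) (hx : 0 ≤ x) (hxy : x ≤ y)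
    {m : ℕ} {A : Set (Om X)} (hA : MeasurableSet A)
    (hdep : DependsOn (· ∈ A) (Set.Ici (-(m : ℤ)))) :
    (forwardLaw y Q : Measure (Om X)) A ≤ (forwardLaw x Q : Measure (Om X)) A +
      (Q : Measure (Om X)) {ω | forwardHit x ω < m} := by
  have hy : 0 ≤ y - x := sub_nonneg.2 hxy
  rw [← sub_add_cancel y x, ← forwardLaw_forwardLaw hy hx hQ.ae_nonposPast hcross]
  exact forwardLaw_le_add_of_plusLaw_eq ((hQ _ hy).trans hQ.plusLaw_eq.symm) x hA hdep

theorem ae_crossesForward_of_plusLaw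
    (h : ∀ᵐ ω ∂(plusLaw e0 μ : Measure (Om X)), CrossesForward x ω) :
    ∀ᵐ ω ∂(μ : Measure (Om X)), CrossesForward x ω :=
  (ae_of_ae_map (measurable_plusProj e0).aemeasurable h).mono fun _ => crossesForward_plusProj.1

theorem ae_nonposPast_of_forall_shiftLaw_eq (hμ : ∀ x, shiftLaw x μ = μ)
    (h0 : ∀ᵐ ω ∂(μ : Measure (Om X)), (0 : EReal) ≤ (ω 0).1) :
    ∀ᵐ ω ∂(μ : Measure (Om X)), NonposPast ω := by
  have hlim : Tendsto (fun x : ℝ => (μ : Measure (Om X)) {ω | (x : EReal) ≤ (ω 0).1}) atTop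
      (𝓝 0) := by
    refine tendsto_measure_of_forall_ae_eventually_notMem
      (fun x => measurableSet_le measurable_const (measurable_height 0)) (.of_forall fun ω => ?_)
    filter_upwards [eventually_gt_atTop ((ω 0).1 : EReal).toReal] with x hx
    exact not_le.2 ((EReal.le_coe_toReal (ω 0).1.2).trans_lt (EReal.coe_lt_coe_iff.2 hx))
  refine nonpos_iff_eq_zero.1 (ge_of_tendsto' hlim fun x => ?_)
  have h0x : ∀ᵐ ω ∂(shiftLaw x μ : Measure (Om X)), (0 : EReal) ≤ (ω 0).1 := by rwa [hμ x]
  have h0Theta : ∀ᵐ ω ∂(μ : Measure (Om X)), (0 : EReal) ≤ (Theta x ω 0).1 :=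
    ae_of_ae_map (measurable_Theta x).aemeasurable h0x
  calc (μ : Measure (Om X)) {ω | ¬ NonposPast ω}
      = (μ : Measure (Om X)) {ω | ¬ NonposPast (Theta x ω)} := by
        conv_lhs => rw [← hμ x]
        exact Measure.map_apply (measurable_Theta x) measurableSet_nonposPast.compl
    _ ≤ (μ : Measure (Om X)) {ω | (x : EReal) ≤ (ω 0).1} :=
        measure_mono_ae <| h0Theta.mono fun ω h0 h => le_height_zero_of_not_nonposPast_Theta h h0

theorem forwardLaw_eq_of_forall_shiftLaw_eq (hμ : ∀ x, shiftLaw x μ = μ)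
    (h0 : ∀ᵐ ω ∂(plusLaw e0 μ : Measure (Om X)), (0 : EReal) ≤ (ω 0).1) (hx : 0 ≤ x) :
    forwardLaw x μ = μ := by
  have h0' : ∀ᵐ ω ∂(μ : Measure (Om X)), (0 : EReal) ≤ (ω 0).1 :=
    (ae_of_ae_map (measurable_plusProj e0).aemeasurable h0).mono fun ω hω => by
      rwa [plusProj_of_nonneg le_rfl] at hω
  rw [← shiftLaw_eq_forwardLaw (ae_nonposPast_of_forall_shiftLaw_eq hμ h0') hx, hμ]

end Laws

section Limits

variable {X : Type*} [TopologicalSpace X] [PolishSpace X] [MeasurableSpace X] [BorelSpace X]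
  {ι : Type*} {L : Filter ι} {e0 : X} {x y : ℝ}
  {μ ν P Q : ProbabilityMeasure (Om X)} {N μs : ι → ProbabilityMeasure (Om X)}

theorem forwardLaw_le_liminf_shiftLaw_add (hN : ∀ i x, ∀ᵐ ω ∂(N i : Measure (Om X)), Crosses x ω)
    (hconv : Tendsto (fun i => plusLaw e0 (shiftLaw (y - x) (N i))) L (𝓝 Q)) (hx : 0 ≤ x)
    (hcross : ∀ᵐ ω ∂(Q : Measure (Om X)), CrossesForward x ω)
    (hne : ∀ᵐ ω ∂(Q : Measure (Om X)), ∀ j : ℕ, ((ω j).1 : EReal) ≠ x) {m : ℕ} {W : Set (Om X)}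
    (hW : IsOpen W) (hdep : DependsOn (· ∈ W) (Set.Ici (-(m : ℤ)))) :
    (forwardLaw x Q : Measure (Om X)) W ≤
      (L.liminf fun i => (shiftLaw y (N i) : Measure (Om X)) W) +
        (Q : Measure (Om X)) {ω | forwardHit x ω < m} := by
  refine (forwardLaw_le_measure_lateEvent_add (m := m) hW.measurableSet).trans ?_
  gcongr
  calc (Q : Measure (Om X)) (lateEvent x m W)
      ≤ L.liminf fun i =>
          (plusLaw e0 (shiftLaw (y - x) (N i)) : Measure (Om X)) (lateEvent x m W) := by
        refine measure_le_liminf_of_ae_mem_nhds hconv ?_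
        filter_upwards [hcross, hne] with ω using mem_nhds_lateEvent hW
    _ ≤ L.liminf fun i => (shiftLaw y (N i) : Measure (Om X)) W := by
        refine liminf_le_liminf (.of_forall fun i => ?_)
        rw [measure_eq_of_plusLaw_eq (plusLaw_plusLaw e0 _)
            (measurableSet_lateEvent x m hW.measurableSet) (plusProj_preimage_lateEvent hdep e0 x),
          ← sub_add_cancel y x, ← forwardLaw_shiftLaw hx (hN i _) (hN i _), sub_add_cancel]
        exact measure_lateEvent_le_forwardLaw hW.measurableSet

theorem ae_height_zero_nonneg_of_tendsto [L.NeBot]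
    (hN : ∀ i, ∀ᵐ ω ∂(N i : Measure (Om X)), Crosses x ω)
    (hconv : Tendsto (fun i => plusLaw e0 (shiftLaw x (N i))) L (𝓝 Q)) :
    ∀ᵐ ω ∂(Q : Measure (Om X)), (0 : EReal) ≤ (ω 0).1 := by
  refine ae_mem_of_tendsto_of_isClosed hconv
    (isClosed_le continuous_const (continuous_height 0)) fun i => ?_
  have hmeas : MeasurableSet {ω : Om X | (0 : EReal) ≤ (ω 0).1} :=
    measurableSet_le measurable_const (measurable_height 0)
  refine (ae_map_iff (measurable_plusProj e0).aemeasurable hmeas).2 ?_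
  simp only [plusProj_of_nonneg le_rfl]
  exact (ae_map_iff (measurable_Theta x).aemeasurable hmeas).2
    ((hN i).mono fun _ => Crosses.Theta_zero_nonneg)

variable [L.IsCountablyGenerated]

theorem tendsto_of_forall_dependsOn_le_liminf
    (h : ∀ (m : ℕ) (W : Set (Om X)), IsOpen W → DependsOn (· ∈ W) (Set.Ici (-(m : ℤ))) →
      (μ : Measure (Om X)) W ≤ L.liminf fun i => (μs i : Measure (Om X)) W) :
    Tendsto μs L (𝓝 μ) := by
  refine tendsto_of_forall_isOpen_le_liminf' fun G hG => ?_
  obtain ⟨W, hmono, rfl, hW⟩ := exists_monotone_isOpen_dependsOn hG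
  rw [hmono.measure_iUnion]
  exact iSup_le fun m => (h m (W m) (hW m).1 (hW m).2).trans
    (liminf_le_liminf (.of_forall fun i => measure_mono (Set.subset_iUnion W m)))

theorem continuous_plusLaw (e0 : X) : Continuous (plusLaw e0) :=
  ProbabilityMeasure.continuous_map (continuous_plusProj e0)

theorem tendsto_forwardLaw (hμs : Tendsto μs L (𝓝 μ))
    (hμ : ∀ᵐ ω ∂(μ : Measure (Om X)), CrossesForward x ω)
    (hx : ∀ᵐ ω ∂(μ : Measure (Om X)), ∀ j : ℕ, ((ω j).1 : EReal) ≠ x) :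
    Tendsto (fun i => forwardLaw x (μs i)) L (𝓝 (forwardLaw x μ)) := by
  refine tendsto_map_of_ae_continuousAt hμs (measurable_forwardShift x) ?_
  filter_upwards [hμ, hx] with ω hω hne using continuousAt_forwardShift hω hne

theorem tendsto_forwardLaw_nhdsGT (hμ : ∀ᵐ ω ∂(μ : Measure (Om X)), CrossesForward x ω) :
    Tendsto (fun z => forwardLaw z μ) (𝓝[>] x) (𝓝 (forwardLaw x μ)) :=
  (tendstoInDistribution_of_ae_tendsto (fun z => (measurable_forwardShift z).aemeasurable)
    (measurable_forwardShift x).aemeasurable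
    (hμ.mono fun _ => tendsto_forwardShift_nhdsGT)).tendsto

theorem apply_forwardLaw_eq_of_tendsto [L.NeBot] {Z : Type*} [TopologicalSpace Z] [T2Space Z]
    {Φ : ProbabilityMeasure (Om X) → Z} {ρ : Z} (hΦ : Continuous Φ) (hμs : Tendsto μs L (𝓝 μ))
    (hμ : ∀ z, ∀ᵐ ω ∂(μ : Measure (Om X)), CrossesForward z ω)
    (hρ : ∀ z > x, Tendsto (fun i => Φ (forwardLaw z (μs i))) L (𝓝 ρ)) :
    Φ (forwardLaw x μ) = ρ := by
  have hfreq : ∃ᶠ z in 𝓝[>] x, Φ (forwardLaw z μ) = ρ := by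
    refine (nhdsGT_basis x).frequently_iff.2 fun z hxz => ?_
    obtain ⟨w, hw, hxw, hwz⟩ := (dense_ae_height_ne (μ : Measure (Om X))).exists_between hxz
    exact ⟨w, ⟨hxw, hwz⟩, tendsto_nhds_unique
      ((hΦ.tendsto _).comp (tendsto_forwardLaw hμs (hμ w) hw)) (hρ w hxw)⟩
  exact tendsto_nhds_unique_of_frequently_eq
    ((hΦ.tendsto _).comp (tendsto_forwardLaw_nhdsGT (hμ x))) tendsto_const_nhds hfreq

theorem ForwardInvariant.isTightMeasureSet_range (hQ : ForwardInvariant e0 Q)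
    (hcross : ∀ z, ∀ᵐ ω ∂(Q : Measure (Om X)), CrossesForward z ω) {κ : ℕ → ℝ}
    (hκ : Tendsto κ atTop atTop) :
    IsTightMeasureSet (Set.range fun k => (forwardLaw (κ k) Q : Measure (Om X))) := by
  refine isTightMeasureSet_pi fun n => isTightMeasureSet_of_forall_le_add fun ε hε => ?_
  obtain ⟨K, hKε, hK⟩ := (((tendsto_measure_forwardHit_lt hcross n.natAbs).eventually_le_const
    hε).and (eventually_ge_atTop 0)).exists
  obtain ⟨k₀, hk₀⟩ := eventually_atTop.1 (hκ.eventually_ge_atTop K)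
  let marginal (z : ℝ) : Measure (NT × X) :=
    (forwardLaw z Q : Measure (Om X)).map fun ω => ω n
  refine ⟨marginal K + ∑ k ∈ Finset.range k₀, marginal (κ k), inferInstance, ?_⟩
  simp only [Set.forall_mem_image, Set.forall_mem_range]
  intro k A hA
  rcases lt_or_ge k k₀ with hk | hk
  · have hle : marginal (κ k) ≤ ∑ k ∈ Finset.range k₀, marginal (κ k) :=
      Finset.single_le_sum (f := fun k => marginal (κ k)) (fun _ _ => Measure.zero_le _)
        (Finset.mem_range.2 hk)
    exact ((hle.trans (Measure.le_add_left le_rfl)) A).trans le_self_add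
  · have hdep : DependsOn (· ∈ (fun ω : Om X => ω n) ⁻¹' A) (Set.Ici (-(n.natAbs : ℤ))) :=
      fun ω η h => by simp only [Set.mem_preimage, h n (Set.mem_Ici.2 (by omega))]
    have hle := hQ.forwardLaw_le_add hcross hK (hk₀ k hk) (measurable_pi_apply n hA) hdep
    rw [Measure.map_apply (measurable_pi_apply n) hA]
    refine hle.trans (add_le_add ?_ hKε)
    rw [← Measure.map_apply (measurable_pi_apply n) hA]
    exact Measure.le_add_right le_rfl A

theorem ForwardInvariant.exists_tendsto_subseq (hQ : ForwardInvariant e0 Q)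
    (hcross : ∀ z, ∀ᵐ ω ∂(Q : Measure (Om X)), CrossesForward z ω) {κ : ℕ → ℝ}
    (hκ : Tendsto κ atTop atTop) :
    ∃ P, ∃ φ : ℕ → ℕ, StrictMono φ ∧ Tendsto (fun k => forwardLaw (κ (φ k)) Q) atTop (𝓝 P) := by
  have hcompact : IsCompact (closure (Set.range fun k => forwardLaw (κ k) Q)) := by
    refine isCompact_closure_of_isTightMeasureSet ?_
    convert hQ.isTightMeasureSet_range hcross hκ using 1
    ext μ
    simp
  obtain ⟨P, -, φ, hφ, hP⟩ := hcompact.tendsto_subseq fun k => subset_closure ⟨k, rfl⟩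
  exact ⟨P, φ, hφ, hP⟩

theorem tendsto_shiftLaw_of_tendsto_forwardLaw
    (hN : ∀ i x, ∀ᵐ ω ∂(N i : Measure (Om X)), Crosses x ω)
    (hconv : ∀ x, Tendsto (fun i => plusLaw e0 (shiftLaw x (N i))) L (𝓝 Q))
    (hcross : ∀ z, ∀ᵐ ω ∂(Q : Measure (Om X)), CrossesForward z ω) {κ : ℕ → ℝ}
    (hκ0 : ∀ k, 0 ≤ κ k) (hκ : Tendsto κ atTop atTop)
    (hne : ∀ k, ∀ᵐ ω ∂(Q : Measure (Om X)), ∀ j : ℕ, ((ω j).1 : EReal) ≠ κ k)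
    (hP : Tendsto (fun k => forwardLaw (κ k) Q) atTop (𝓝 P)) (x : ℝ) :
    Tendsto (fun i => shiftLaw x (N i)) L (𝓝 P) := by
  refine tendsto_of_forall_dependsOn_le_liminf fun m W hW hdep => ?_
  set c := L.liminf fun i => (shiftLaw x (N i) : Measure (Om X)) W
  have hlim : Tendsto (fun k => c + (Q : Measure (Om X)) {ω | forwardHit (κ k) ω < m}) atTop
      (𝓝 c) := by
    simpa only [add_zero, Function.comp_def] using
      tendsto_const_nhds.add ((tendsto_measure_forwardHit_lt hcross m).comp hκ)
  calc (P : Measure (Om X)) W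
      ≤ atTop.liminf fun k => (forwardLaw (κ k) Q : Measure (Om X)) W :=
        ProbabilityMeasure.le_liminf_measure_open_of_tendsto hP hW
    _ ≤ atTop.liminf fun k => c + (Q : Measure (Om X)) {ω | forwardHit (κ k) ω < m} :=
        liminf_le_liminf <| .of_forall fun k =>
          forwardLaw_le_liminf_shiftLaw_add hN (hconv _) (hκ0 k) (hcross _) (hne k) hW hdep
    _ = c := hlim.liminf_eq

theorem forwardInvariant_of_tendsto [L.NeBot]
    (hN : ∀ i x, ∀ᵐ ω ∂(N i : Measure (Om X)), Crosses x ω)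
    (hconv : ∀ x, Tendsto (fun i => plusLaw e0 (shiftLaw x (N i))) L (𝓝 Q))
    (hcross : ∀ z, ∀ᵐ ω ∂(Q : Measure (Om X)), CrossesForward z ω) : ForwardInvariant e0 Q := by
  refine fun x hx => apply_forwardLaw_eq_of_tendsto (continuous_plusLaw e0) (hconv 0) hcross
    fun z hz => (hconv (0 + z)).congr fun i => ?_
  rw [plusLaw_forwardLaw_plusLaw, forwardLaw_shiftLaw (hx.trans hz.le) (hN i _) (hN i _)]

theorem exists_tendsto_shiftLaw [L.NeBot]
    (hN : ∀ i x, ∀ᵐ ω ∂(N i : Measure (Om X)), Crosses x ω)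
    (hconv : ∀ x, Tendsto (fun i => plusLaw e0 (shiftLaw x (N i))) L (𝓝 Q))
    (hcross : ∀ z, ∀ᵐ ω ∂(Q : Measure (Om X)), CrossesForward z ω) :
    ∃ P, ∀ x, Tendsto (fun i => shiftLaw x (N i)) L (𝓝 P) := by
  obtain ⟨κ, hκ0, hκ, hne⟩ := exists_levels_tendsto_atTop (Q : Measure (Om X))
  obtain ⟨P, φ, hφ, hP⟩ :=
    (forwardInvariant_of_tendsto hN hconv hcross).exists_tendsto_subseq hcross hκ
  exact ⟨P, tendsto_shiftLaw_of_tendsto_forwardLaw hN hconv hcross (fun k => hκ0 (φ k))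
    (hκ.comp hφ.tendsto_atTop) (fun k => hne (φ k)) hP⟩

theorem shiftLaw_eq_of_tendsto [L.NeBot]
    (hN : ∀ i x, ∀ᵐ ω ∂(N i : Measure (Om X)), Crosses x ω)
    (hP : ∀ x, Tendsto (fun i => shiftLaw x (N i)) L (𝓝 P))
    (hcross : ∀ z, ∀ᵐ ω ∂(P : Measure (Om X)), CrossesForward z ω) (x : ℝ) :
    shiftLaw x P = P := by
  have hpast : ∀ᵐ ω ∂(P : Measure (Om X)), NonposPast ω :=
    ae_mem_of_tendsto_of_isClosed (hP 0) isClosed_nonposPast fun i =>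
      (ae_map_iff (measurable_Theta 0).aemeasurable measurableSet_nonposPast).2
        ((hN i 0).mono fun _ => Crosses.nonposPast_Theta)
  have hnonneg (y : ℝ) (hy : 0 ≤ y) : shiftLaw y P = P := by
    rw [shiftLaw_eq_forwardLaw hpast hy]
    refine apply_forwardLaw_eq_of_tendsto continuous_id (hP 0) hcross fun z hz =>
      (hP (0 + z)).congr fun i => ?_
    rw [id, forwardLaw_shiftLaw (hy.trans hz.le) (hN i _) (hN i _)]
  rcases le_total 0 x with hx | hx
  · exact hnonneg x hx
  · have hcross0 : ∀ᵐ ω ∂(P : Measure (Om X)), Crosses (-x + x) ω := by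
      filter_upwards [hpast, hcross (-x + x)] with ω hω h
      exact (hω.crosses_iff (neg_add_cancel x).ge).2 h
    calc shiftLaw x P = shiftLaw x (shiftLaw (-x) P) := by rw [hnonneg _ (neg_nonneg.2 hx)]
      _ = P := by rw [shiftLaw_shiftLaw hcross0, neg_add_cancel, hnonneg 0 le_rfl]

theorem eq_of_plusLaw_eq (hμν : plusLaw e0 μ = plusLaw e0 ν)
    (hμ : ∀ x, 0 ≤ x → forwardLaw x μ = μ) (hν : ∀ x, 0 ≤ x → forwardLaw x ν = ν)
    (hcross : ∀ z, ∀ᵐ ω ∂(ν : Measure (Om X)), CrossesForward z ω) : μ = ν := by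
  refine tendsto_nhds_unique (f := fun _ : ℕ => ν) (l := atTop)
    (tendsto_of_forall_dependsOn_le_liminf fun m W hW hdep => ?_) tendsto_const_nhds
  rw [liminf_const]
  have hlim : Tendsto (fun x => (ν : Measure (Om X)) W +
      (ν : Measure (Om X)) {ω | forwardHit x ω < m}) atTop (𝓝 ((ν : Measure (Om X)) W)) := by
    simpa only [add_zero] using tendsto_const_nhds.add (tendsto_measure_forwardHit_lt hcross m)
  refine ge_of_tendsto hlim ((eventually_ge_atTop 0).mono fun x hx => ?_)
  simpa only [hμ x hx, hν x hx] using
    forwardLaw_le_add_of_plusLaw_eq hμν x hW.measurableSet hdep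

theorem exists_stationary_tendsto_shiftLaw [L.NeBot]
    (hN : ∀ i x, ∀ᵐ ω ∂(N i : Measure (Om X)), Crosses x ω)
    (hconv : ∀ x, Tendsto (fun i => plusLaw e0 (shiftLaw x (N i))) L (𝓝 Q))
    (hcross : ∀ z, ∀ᵐ ω ∂(Q : Measure (Om X)), CrossesForward z ω) :
    ∃ P, ((∀ x, shiftLaw x P = P) ∧ plusLaw e0 P = Q) ∧
      (∀ P', (∀ x, shiftLaw x P' = P') → plusLaw e0 P' = Q → P' = P) ∧
      ∀ x, Tendsto (fun i => shiftLaw x (N i)) L (𝓝 P) := by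
  obtain ⟨P, hP⟩ := exists_tendsto_shiftLaw hN hconv hcross
  have hplus : plusLaw e0 P = Q :=
    tendsto_nhds_unique (((continuous_plusLaw e0).tendsto P).comp (hP 0)) (hconv 0)
  have hcrossP (z : ℝ) : ∀ᵐ ω ∂(P : Measure (Om X)), CrossesForward z ω :=
    ae_crossesForward_of_plusLaw (hplus.symm ▸ hcross z)
  have hstat := shiftLaw_eq_of_tendsto hN hP hcrossP
  have hforward (P' : ProbabilityMeasure (Om X)) (hstat' : ∀ x, shiftLaw x P' = P')
      (hplus' : plusLaw e0 P' = Q) (x : ℝ) (hx : 0 ≤ x) : forwardLaw x P' = P' :=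
    forwardLaw_eq_of_forall_shiftLaw_eq hstat'
      (hplus'.symm ▸ ae_height_zero_nonneg_of_tendsto (fun i => hN i 0) (hconv 0)) hx
  exact ⟨P, ⟨hstat, hplus⟩, fun P' hstat' hplus' => eq_of_plusLaw_eq (hplus'.trans hplus.symm)
    (hforward P' hstat' hplus') (hforward P hstat hplus) hcrossP, hP⟩

end Limits

theorem ae_of_measure_eq_one_of_imp {Ω : Type*} [MeasurableSpace Ω] {μ : Measure Ω}
    [IsProbabilityMeasure μ] {p q : Ω → Prop} (hp : μ {ω | p ω} = 1)
    (hq : MeasurableSet {ω | q ω}) (hpq : ∀ ω, p ω → q ω) : ∀ᵐ ω ∂μ, q ω :=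
  (mem_ae_iff_prob_eq_one hq).2 (prob_le_one.antisymm (hp ▸ measure_mono hpq))

theorem spatially_stationary_limit_general {ι : Type*} (L : Filter ι) [L.NeBot]
    [L.IsCountablyGenerated] (e0 : E) (N : ι → Measure (Om E))
    (hNprob : ∀ᶠ i in L, IsProbabilityMeasure (N i))
    (hNmass : ∀ᶠ i in L,
      N i {ω : Om E | Tendsto (fun n : ℤ => ((ω n).1 : EReal)) atBot (𝓝 ⊥) ∧
        Filter.limsup (fun n : ℤ => ((ω n).1 : EReal)) atTop = ⊤} = 1)
    (Q : Measure (Om E)) (hQprob : IsProbabilityMeasure Q)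
    (hQmass : Q {ω : Om E |
      Filter.limsup (fun n : ℤ => ((ω n).1 : EReal)) atTop = ⊤} = 1)
    (hconv : ∀ x : ℝ, ∀ f : BoundedContinuousFunction (Om E) ℝ,
      Tendsto (fun i => ∫ ω, f ω ∂(((N i).map (Theta x)).map (plusProj e0)))
        L (𝓝 (∫ ω, f ω ∂Q))) :
    ∃ P : Measure (Om E),
      (IsProbabilityMeasure P ∧ (∀ x : ℝ, P.map (Theta x) = P) ∧
        P.map (plusProj e0) = Q) ∧
      (∀ P' : Measure (Om E), IsProbabilityMeasure P' →
        (∀ x : ℝ, P'.map (Theta x) = P') → P'.map (plusProj e0) = Q → P' = P) ∧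
      (∀ x : ℝ, ∀ f : BoundedContinuousFunction (Om E) ℝ,
        Tendsto (fun i => ∫ ω, f ω ∂((N i).map (Theta x))) L (𝓝 (∫ ω, f ω ∂P))) := by
  let good : Set ι := {i | IsProbabilityMeasure (N i) ∧
    N i {ω : Om E | Tendsto (fun n : ℤ => ((ω n).1 : EReal)) atBot (𝓝 ⊥) ∧
      Filter.limsup (fun n : ℤ => ((ω n).1 : EReal)) atTop = ⊤} = 1}
  have hgood : Set.range ((↑) : good → ι) ∈ L := by
    rw [Subtype.range_coe]
    exact hNprob.and hNmass
  have : (comap ((↑) : good → ι) L).NeBot := NeBot.comap_of_range_mem ‹_› hgood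
  let N' (i : good) : ProbabilityMeasure (Om E) := ⟨N i, i.2.1⟩
  have hN' (i : good) (x : ℝ) : ∀ᵐ ω ∂(N' i : Measure (Om E)), Crosses x ω :=
    ae_of_measure_eq_one_of_imp i.2.2 (measurableSet_crosses x) fun ω hω =>
      crosses_of_tendsto_of_limsup_eq_top hω.1 hω.2 x
  have hcross (z : ℝ) : ∀ᵐ ω ∂Q, CrossesForward z ω :=
    ae_of_measure_eq_one_of_imp hQmass (measurableSet_crossesForward z) fun ω hω =>
      crossesForward_of_limsup_eq_top hω z
  have hconv' (x : ℝ) : Tendsto (fun i => plusLaw e0 (shiftLaw x (N' i))) (comap (↑) L)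
      (𝓝 ⟨Q, hQprob⟩) :=
    ProbabilityMeasure.tendsto_iff_forall_integral_tendsto.2 fun f =>
      (hconv x f).comp tendsto_comap
  obtain ⟨P, ⟨hstat, hplus⟩, huniq, hlim⟩ := exists_stationary_tendsto_shiftLaw hN' hconv' hcross
  refine ⟨P, ⟨P.2, fun x => congrArg Subtype.val (hstat x), congrArg Subtype.val hplus⟩,
    fun P' hP' hstat' hplus' => ?_, fun x f => ?_⟩
  · exact congrArg Subtype.val
      (huniq ⟨P', hP'⟩ (fun x => Subtype.ext (hstat' x)) (Subtype.ext hplus'))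
  · exact (tendsto_comap'_iff hgood).1
      (ProbabilityMeasure.tendsto_iff_forall_integral_tendsto.1 (hlim x) f)

/-- **Lemma 2 (abstract convergence to a spatially stationary law).**
If `(P_v)_{v>0}` are probability laws on `Ω`, concentrated on sequences whose first
coordinate tends to `-∞` at `-∞` and has `limsup = +∞` at `+∞`, and if for every `x ∈ ℝ`
the laws `(P_v ∘ Θ_x⁻¹)_+` converge weakly as `v → 0` to a law `Q` on `Ω_+`, then there
exists a unique spatially stationary probability law `P` on `Ω` with `P_+ = Q`, and
moreover `P_v ∘ Θ_x⁻¹` converges weakly to `P` for every `x`. -/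
theorem spatially_stationary_limit
    (e0 : E) (he0 : IsOpen ({e0} : Set E))
    (Pv : ℝ → Measure (Om E))
    (hPprob : ∀ v : ℝ, 0 < v → IsProbabilityMeasure (Pv v))
    (hPmass : ∀ v : ℝ, 0 < v →
      Pv v {ω : Om E | Tendsto (fun n : ℤ => ((ω n).1 : EReal)) atBot (𝓝 ⊥) ∧
        Filter.limsup (fun n : ℤ => ((ω n).1 : EReal)) atTop = ⊤} = 1)
    (Q : Measure (Om E)) (hQprob : IsProbabilityMeasure Q)
    (hQplus : Q {ω : Om E | ∀ n : ℤ, n < 0 → ω n = (botNT, e0)} = 1)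
    (hQmass : Q {ω : Om E |
      Filter.limsup (fun n : ℤ => ((ω n).1 : EReal)) atTop = ⊤} = 1)
    (hconv : ∀ x : ℝ, ∀ f : BoundedContinuousFunction (Om E) ℝ,
      Tendsto (fun v : ℝ => ∫ ω, f ω ∂(((Pv v).map (Theta x)).map (plusProj e0)))
        (𝓝[>] (0 : ℝ)) (𝓝 (∫ ω, f ω ∂Q))) :
    ∃ P : Measure (Om E),
      (IsProbabilityMeasure P ∧ (∀ x : ℝ, P.map (Theta x) = P) ∧
        P.map (plusProj e0) = Q) ∧
      (∀ P' : Measure (Om E), IsProbabilityMeasure P' →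
        (∀ x : ℝ, P'.map (Theta x) = P') → P'.map (plusProj e0) = Q → P' = P) ∧
      (∀ x : ℝ, ∀ f : BoundedContinuousFunction (Om E) ℝ,
        Tendsto (fun v : ℝ => ∫ ω, f ω ∂((Pv v).map (Theta x)))
          (𝓝[>] (0 : ℝ)) (𝓝 (∫ ω, f ω ∂P))) := by
  exact spatially_stationary_limit_general (𝓝[>] 0) e0 Pv
    (eventually_mem_nhdsWithin.mono hPprob) (eventually_mem_nhdsWithin.mono hPmass) Q hQprob
    hQmass hconv
end
end

section
/- For real numbers 0 < u ≤ a, 0 < v ≤ a, define g_{u,v}(s) = (√2 (u³ + v³)/(s² √(uv))) · exp(−2(v² − uv + u²)/s) · ∫_0^{4uv/s} e^{−3θ/2} dθ/√(πθ) for s > 0. Then g_{u,v}(s) ≤ (8√2/√π) a³ s^{−5/2} for all s > 0, and consequently for every t > 0, ∫_{t a²}^∞ g_{u,v}(s) ds ≤ (16√2/(3√π)) t^{−3/2}. -/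
open MeasureTheory ProbabilityTheory Filter Real Topology

noncomputable section

/-!
On `θ > 0` the weight `e^{-3θ/2}` is at most `1`, so the inner integral is at most
`∫_0^{4uv/s} dθ/√(πθ) = 4 √(uv)/√(πs)`. Its factor `√(uv)` cancels the singular prefactor `1/√(uv)`,
and the outer exponential is at most `1` because `v² - uv + u² ≥ 0`. Hence
`g_{u,v}(s) ≤ (4√2/√π) (u³ + v³) s^{-5/2}`, whose integral over `(t a², ∞)` scales like
`(u³ + v³) a^{-3} t^{-3/2}`, and `u³ + v³ ≤ 2a³` makes this uniform in the endpoint speeds.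
-/

theorem intervalIntegral_le_of_le_mul_rpow {f : ℝ → ℝ} {C r x : ℝ} (hr : -1 < r) (hx : 0 ≤ x)
    (hf₀ : ∀ θ ∈ Set.Ioc 0 x, 0 ≤ f θ) (hf : ∀ θ ∈ Set.Ioc 0 x, f θ ≤ C * θ ^ r) :
    ∫ θ in (0 : ℝ)..x, f θ ≤ C * (x ^ (r + 1) / (r + 1)) := by
  have hint : IntegrableOn (fun θ ↦ C * θ ^ r) (Set.Ioc 0 x) :=
    (intervalIntegrable_iff_integrableOn_Ioc_of_le hx).1
      ((intervalIntegral.intervalIntegrable_rpow' hr).const_mul C)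
  calc ∫ θ in (0 : ℝ)..x, f θ
      ≤ ∫ θ in (0 : ℝ)..x, C * θ ^ r := by
        rw [intervalIntegral.integral_of_le hx, intervalIntegral.integral_of_le hx]
        exact integral_mono_of_nonneg (ae_restrict_of_forall_mem measurableSet_Ioc hf₀) hint
          (ae_restrict_of_forall_mem measurableSet_Ioc hf)
    _ = C * (x ^ (r + 1) / (r + 1)) := by
        rw [intervalIntegral.integral_const_mul, integral_rpow (Or.inl hr),
          Real.zero_rpow (by linarith), sub_zero]

theorem setIntegral_Ioi_le_of_le_mul_rpow {f : ℝ → ℝ} {C r T : ℝ} (hr : r < -1) (hT : 0 < T)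
    (hf₀ : ∀ s ∈ Set.Ioi T, 0 ≤ f s) (hf : ∀ s ∈ Set.Ioi T, f s ≤ C * s ^ r) :
    ∫ s in Set.Ioi T, f s ≤ C * (-T ^ (r + 1) / (r + 1)) := by
  calc ∫ s in Set.Ioi T, f s
      ≤ ∫ s in Set.Ioi T, C * s ^ r :=
        integral_mono_of_nonneg (ae_restrict_of_forall_mem measurableSet_Ioi hf₀)
          ((integrableOn_Ioi_rpow_of_lt hr hT).const_mul C)
          (ae_restrict_of_forall_mem measurableSet_Ioi hf)
    _ = C * (-T ^ (r + 1) / (r + 1)) := by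
        rw [integral_const_mul, integral_Ioi_rpow_of_lt hr hT]

theorem intervalIntegral_div_sqrt_mul_le {f : ℝ → ℝ} {C k x : ℝ} (hk : 0 < k) (hx : 0 ≤ x)
    (hf₀ : ∀ θ ∈ Set.Ioc 0 x, 0 ≤ f θ) (hf : ∀ θ ∈ Set.Ioc 0 x, f θ ≤ C) :
    ∫ θ in (0 : ℝ)..x, f θ / √(k * θ) ≤ 2 * C * √x / √k := by
  have hle : ∀ θ ∈ Set.Ioc 0 x, f θ / √(k * θ) ≤ C / √k * θ ^ (-(1 / 2) : ℝ) := fun θ hθ ↦ by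
    rw [Real.rpow_neg hθ.1.le, ← Real.sqrt_eq_rpow, Real.sqrt_mul hk.le, ← div_eq_mul_inv,
      div_div]
    gcongr
    exact hf θ hθ
  calc ∫ θ in (0 : ℝ)..x, f θ / √(k * θ)
      ≤ C / √k * (x ^ (-(1 / 2) + 1 : ℝ) / (-(1 / 2) + 1)) :=
        intervalIntegral_le_of_le_mul_rpow (by norm_num) hx
          (fun θ hθ ↦ div_nonneg (hf₀ θ hθ) (Real.sqrt_nonneg _)) hle
    _ = 2 * C * √x / √k := by
        rw [Real.sqrt_eq_rpow x, show (-(1 / 2) + 1 : ℝ) = 1 / 2 by norm_num]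
        ring

theorem rpow_neg_five_halves {s : ℝ} (hs : 0 < s) : s ^ (-(5 : ℝ) / 2) = 1 / (s ^ 2 * √s) := by
  rw [show (-(5 : ℝ) / 2) = -((2 : ℕ) + 1 / 2) by norm_num, Real.rpow_neg hs.le,
    Real.rpow_add hs, Real.rpow_natCast, ← Real.sqrt_eq_rpow, one_div]

theorem mul_sq_rpow_neg_three_halves {a t : ℝ} (ha : 0 ≤ a) (ht : 0 ≤ t) :
    (t * a ^ 2) ^ (-(3 : ℝ) / 2) = t ^ (-(3 : ℝ) / 2) / a ^ 3 := by
  rw [Real.mul_rpow ht (sq_nonneg a), ← Real.rpow_natCast a 2, ← Real.rpow_mul ha,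
    show ((2 : ℕ) : ℝ) * (-3 / 2) = -(3 : ℕ) by norm_num, Real.rpow_neg ha, Real.rpow_natCast,
    ← div_eq_mul_inv]

/-- The conditional density `g_{u,v}` of the duration of the first arch, given that it starts at
speed `u` and ends at incoming speed `v`. It stands for the paper's density only at arguments
`s > 0`. -/
def archDurationDensity (u v s : ℝ) : ℝ :=
  (√2 * (u ^ 3 + v ^ 3) / (s ^ 2 * √(u * v))) * Real.exp (-2 * (v ^ 2 - u * v + u ^ 2) / s) *
    ∫ θ in (0 : ℝ)..(4 * u * v / s), Real.exp (-3 * θ / 2) / √(Real.pi * θ)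

section ArchDurationDensity

variable {u v s T : ℝ}

theorem integral_exp_div_sqrt_pi_mul_nonneg {x : ℝ} (hx : 0 ≤ x) :
    0 ≤ ∫ θ in (0 : ℝ)..x, Real.exp (-3 * θ / 2) / √(Real.pi * θ) :=
  intervalIntegral.integral_nonneg hx fun _ _ ↦ by positivity

theorem integral_exp_div_sqrt_pi_mul_le {x : ℝ} (hx : 0 ≤ x) :
    ∫ θ in (0 : ℝ)..x, Real.exp (-3 * θ / 2) / √(Real.pi * θ) ≤ 2 * √x / √Real.pi := by
  have hexp : ∀ θ ∈ Set.Ioc 0 x, Real.exp (-3 * θ / 2) ≤ 1 := fun θ hθ ↦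
    Real.exp_le_one_iff.2 (by linarith [hθ.1])
  simpa only [mul_one] using intervalIntegral_div_sqrt_mul_le Real.pi_pos hx
    (fun θ _ ↦ (Real.exp_pos (-3 * θ / 2)).le) hexp

theorem archDurationDensity_nonneg (hu : 0 ≤ u) (hv : 0 ≤ v) (hs : 0 ≤ s) :
    0 ≤ archDurationDensity u v s := by
  have hint := integral_exp_div_sqrt_pi_mul_nonneg (x := 4 * u * v / s) (by positivity)
  unfold archDurationDensity
  positivity

theorem archDurationDensity_le (hu : 0 < u) (hv : 0 < v) (hs : 0 < s) :
    archDurationDensity u v s ≤ 4 * √2 / √Real.pi * (u ^ 3 + v ^ 3) * s ^ (-(5 : ℝ) / 2) := by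
  have hx : 0 ≤ 4 * u * v / s := by positivity
  have hquad : 0 ≤ v ^ 2 - u * v + u ^ 2 := by nlinarith [sq_nonneg (u - v)]
  have hexp : Real.exp (-2 * (v ^ 2 - u * v + u ^ 2) / s) ≤ 1 :=
    Real.exp_le_one_iff.2 (div_nonpos_of_nonpos_of_nonneg (by linarith) hs.le)
  have hsqrt : √(4 * u * v / s) = 2 * √(u * v) / √s := by
    rw [Real.sqrt_div (by positivity), mul_assoc, Real.sqrt_mul (by norm_num),
      show (4 : ℝ) = 2 ^ 2 by norm_num, Real.sqrt_sq (by norm_num)]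
  calc archDurationDensity u v s
      ≤ √2 * (u ^ 3 + v ^ 3) / (s ^ 2 * √(u * v)) * 1 * (2 * √(4 * u * v / s) / √Real.pi) := by
        unfold archDurationDensity
        gcongr
        · exact integral_exp_div_sqrt_pi_mul_nonneg hx
        · exact integral_exp_div_sqrt_pi_mul_le hx
    _ = 4 * √2 / √Real.pi * (u ^ 3 + v ^ 3) * s ^ (-(5 : ℝ) / 2) := by
        rw [hsqrt, rpow_neg_five_halves hs]
        have huv : √(u * v) ≠ 0 := by positivity
        field_simp
        ring

theorem setIntegral_Ioi_archDurationDensity_le (hu : 0 < u) (hv : 0 < v) (hT : 0 < T) :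
    ∫ s in Set.Ioi T, archDurationDensity u v s ≤
      8 * √2 / (3 * √Real.pi) * (u ^ 3 + v ^ 3) * T ^ (-(3 : ℝ) / 2) := by
  calc ∫ s in Set.Ioi T, archDurationDensity u v s
      ≤ 4 * √2 / √Real.pi * (u ^ 3 + v ^ 3) *
          (-T ^ (-(5 : ℝ) / 2 + 1) / (-(5 : ℝ) / 2 + 1)) :=
        setIntegral_Ioi_le_of_le_mul_rpow (by norm_num) hT
          (fun _ hs ↦ archDurationDensity_nonneg hu.le hv.le (hT.trans hs).le)
          (fun _ hs ↦ archDurationDensity_le hu hv (hT.trans hs))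
    _ = 8 * √2 / (3 * √Real.pi) * (u ^ 3 + v ^ 3) * T ^ (-(3 : ℝ) / 2) := by
        rw [show (-(5 : ℝ) / 2 + 1) = -(3 : ℝ) / 2 by norm_num]
        field_simp
        ring

theorem arch_duration_tail_bound_general {a : ℝ} (hu : 0 < u) (hv : 0 < v)
    (huva : u ^ 3 + v ^ 3 ≤ 2 * a ^ 3) :
    (∀ s : ℝ, 0 < s →
      archDurationDensity u v s ≤ 8 * √2 / √Real.pi * a ^ 3 * s ^ (-(5 : ℝ) / 2)) ∧
    (∀ t : ℝ, 0 < t →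
      ∫ s in Set.Ioi (t * a ^ 2), archDurationDensity u v s ≤
        16 * √2 / (3 * √Real.pi) * t ^ (-(3 : ℝ) / 2)) := by
  have ha : 0 < a := by
    have : 0 < u ^ 3 + v ^ 3 := by positivity
    exact (Odd.pow_pos_iff (by decide : Odd 3)).1 (by linarith)
  refine ⟨fun s hs ↦ ?_, fun t ht ↦ ?_⟩
  · calc archDurationDensity u v s
        ≤ 4 * √2 / √Real.pi * (u ^ 3 + v ^ 3) * s ^ (-(5 : ℝ) / 2) :=
          archDurationDensity_le hu hv hs
      _ ≤ 4 * √2 / √Real.pi * (2 * a ^ 3) * s ^ (-(5 : ℝ) / 2) := by gcongr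
      _ = 8 * √2 / √Real.pi * a ^ 3 * s ^ (-(5 : ℝ) / 2) := by ring
  · calc ∫ s in Set.Ioi (t * a ^ 2), archDurationDensity u v s
        ≤ 8 * √2 / (3 * √Real.pi) * (u ^ 3 + v ^ 3) * (t * a ^ 2) ^ (-(3 : ℝ) / 2) :=
          setIntegral_Ioi_archDurationDensity_le hu hv (by positivity)
      _ ≤ 8 * √2 / (3 * √Real.pi) * (2 * a ^ 3) * (t * a ^ 2) ^ (-(3 : ℝ) / 2) := by gcongr
      _ = 16 * √2 / (3 * √Real.pi) * t ^ (-(3 : ℝ) / 2) := by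
          rw [mul_sq_rpow_neg_three_halves ha.le ht.le]
          field_simp
          ring

end ArchDurationDensity

/-- **Lemma 10.2 (uniform tail bound for arch durations).** For `0 < u ≤ a` and
`0 < v ≤ a`, the conditional arch-duration density
`g_{u,v}(s) = (√2 (u³+v³)/(s² √(uv))) e^{-2(v² - uv + u²)/s} ∫_0^{4uv/s} e^{-3θ/2} dθ/√(πθ)`
satisfies `g_{u,v}(s) ≤ (8√2/√π) a³ s^{-5/2}` for all `s > 0`, and hence
`∫_{ta²}^∞ g_{u,v}(s) ds ≤ (16√2/(3√π)) t^{-3/2}` for every `t > 0`. -/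
theorem arch_duration_tail_bound (a u v : ℝ)
    (hu : 0 < u) (hua : u ≤ a) (hv : 0 < v) (hva : v ≤ a)
    (g : ℝ → ℝ)
    (hg : ∀ s : ℝ, g s =
      (Real.sqrt 2 * (u ^ 3 + v ^ 3) / (s ^ 2 * Real.sqrt (u * v))) *
        Real.exp (-2 * (v ^ 2 - u * v + u ^ 2) / s) *
        ∫ θ in (0 : ℝ)..(4 * u * v / s),
          Real.exp (-3 * θ / 2) / Real.sqrt (Real.pi * θ)) :
    (∀ s : ℝ, 0 < s →
      g s ≤ (8 * Real.sqrt 2 / Real.sqrt Real.pi) * a ^ 3 * s ^ (-(5 : ℝ) / 2)) ∧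
    (∀ t : ℝ, 0 < t →
      (∫ s in Set.Ioi (t * a ^ 2), g s) ≤
        (16 * Real.sqrt 2 / (3 * Real.sqrt Real.pi)) * t ^ (-(3 : ℝ) / 2)) := by
  obtain rfl : g = archDurationDensity u v := funext hg
  have huva : u ^ 3 + v ^ 3 ≤ 2 * a ^ 3 := by rw [two_mul]; gcongr
  exact arch_duration_tail_bound_general hu hv huva
end
end
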